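/- arXiv:1907.08476 — 3 statements merged into one kernel-verified Lean document; each statement's English description precedes it below -/
import Mathlib

section
/- Let n ≥ 3 be an integer and let h be a continuous function on [0,∞) satisfying h(r) ≥ -(n-1)/r for all r > 0. If u is a C² solution of the ODE u''(r) + ((n-1)/r)u'(r) − (n-2)u(r)³ − (2(n-1)/r)u(r)² − ((n-1)/r²)u(r) + (n-4)u(r)u'(r) = [u'(r) + u(r)/r]·h(r) with initial conditions u(0) = 0 and u'(0) = α > 0, then u is not global: its maximal interval of existence [0,R) has R < ∞, and u(r) → +∞ as r ↑ R. -/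
/-- The ODE (equaz): `u'' + ((n-1)/r)u' - (n-2)u³ - (2(n-1)/r)u² - ((n-1)/r²)u + (n-4)uu'
    = [u' + u/r]·h(r)`, stated pointwise at `r` for a function `u` with first and second
    derivatives `u'`, `u''`. -/
def Equaz (n : ℕ) (h u u' u'' : ℝ → ℝ) (r : ℝ) : Prop :=
  u'' r + ((n : ℝ) - 1) / r * u' r - ((n : ℝ) - 2) * u r ^ 3
    - 2 * ((n : ℝ) - 1) / r * u r ^ 2 - ((n : ℝ) - 1) / r ^ 2 * u r
    + ((n : ℝ) - 4) * u r * u' r = (u' r + u r / r) * h r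

/-- `u` (with derivatives `u'`, `u''`) is a C² solution of (equaz) on the set `S`
    (typically `[0,R)` or `[0,∞)`) with initial conditions `u(0) = 0`, `u'(0) = α`. -/
def SolOn (n : ℕ) (h : ℝ → ℝ) (α : ℝ) (u u' u'' : ℝ → ℝ) (S : Set ℝ) : Prop :=
  (∀ r ∈ S, HasDerivWithinAt u (u' r) S r) ∧
  (∀ r ∈ S, HasDerivWithinAt u' (u'' r) S r) ∧
  ContinuousOn u'' S ∧
  u 0 = 0 ∧ u' 0 = α ∧
  ∀ r ∈ S, 0 < r → Equaz n h u u' u'' r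

/-- `[0,R)` is a maximal interval of existence for the solution `u`:
    `u` admits no extension to a solution on a strictly larger interval `[0,R')`. -/
def MaximalOn (n : ℕ) (h : ℝ → ℝ) (α : ℝ) (u : ℝ → ℝ) (R : ℝ) : Prop :=
  ¬ ∃ (R' : ℝ) (v v' v'' : ℝ → ℝ), R < R' ∧
      SolOn n h α v v' v'' (Set.Ico 0 R') ∧ Set.EqOn v u (Set.Ico 0 R)

open Set Filter Topology

lemma SolOn.restrict {n : ℕ} {h u u' u'' : ℝ → ℝ} {α : ℝ} {S T : Set ℝ}
    (H : SolOn n h α u u' u'' S) (hT : T ⊆ S) : SolOn n h α u u' u'' T := by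
  obtain ⟨h1, h2, h3, h4, h5, h6⟩ := H
  exact ⟨fun r hr => (h1 r (hT hr)).mono hT, fun r hr => (h2 r (hT hr)).mono hT, h3.mono hT,
    h4, h5, fun r hr => h6 r (hT hr)⟩

/-- The algebraic inequality at a crossing point. -/
lemma crossing_pos (n x r u p q H : ℝ) (hn : 3 ≤ n) (hr : 0 < r) (hu : 0 < u)
    (hH : -(n - 1) / r ≤ H)
    (hQ : u / 2 + r * p - r * u ^ 2 / 4 = 0)
    (hx : x = p / 2 + (p + r * q) - (u ^ 2 / 4 + r * u * p / 2))
    (heq : q + (n - 1) / r * p - (n - 2) * u ^ 3 - 2 * (n - 1) / r * u ^ 2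
      - (n - 1) / r ^ 2 * u + (n - 4) * u * p = (p + u / r) * H) : 0 < x := by
  have hp : p = u ^ 2 / 4 - u / (2 * r) := by field_simp; linarith
  have hpos : 0 < p + u / r := by
    have : p + u / r = u ^ 2 / 4 + u / (2 * r) := by rw [hp]; field_simp; ring
    rw [this]; positivity
  have h1 : (p + u / r) * (-(n - 1) / r) ≤ (p + u / r) * H :=
    mul_le_mul_of_nonneg_left hH hpos.le
  have h2 : (n - 2) * u ^ 3 + 2 * (n - 1) / r * u ^ 2 + (n - 1) / r ^ 2 * u - (n - 4) * u * p
      - (n - 1) / r * p + (p + u / r) * (-(n - 1) / r) ≤ q := by linarith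
  have h3 : r * ((n - 2) * u ^ 3 + 2 * (n - 1) / r * u ^ 2 + (n - 1) / r ^ 2 * u
      - (n - 4) * u * p
      - (n - 1) / r * p + (p + u / r) * (-(n - 1) / r)) ≤ r * q :=
    mul_le_mul_of_nonneg_left h2 hr.le
  have h4 : 0 < p / 2 + (p + r * ((n - 2) * u ^ 3 + 2 * (n - 1) / r * u ^ 2
      + (n - 1) / r ^ 2 * u - (n - 4) * u * p
      - (n - 1) / r * p + (p + u / r) * (-(n - 1) / r))) - (u ^ 2 / 4 + r * u * p / 2) := by
    obtain ⟨m, rfl⟩ : ∃ m, n = m + 3 := ⟨n - 3, by ring⟩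
    have hm : 0 ≤ m := by linarith
    have : p / 2 + (p + r * ((m + 3 - 2) * u ^ 3 + 2 * (m + 3 - 1) / r * u ^ 2
      + (m + 3 - 1) / r ^ 2 * u - (m + 3 - 4) * u * p
      - (m + 3 - 1) / r * p + (p + u / r) * (-(m + 3 - 1) / r))) - (u ^ 2 / 4 + r * u * p / 2)
      = (u / r) * ((m * (3/4) + 9/8) * (r * u) ^ 2 + (2 * m + 23/8) * (r * u)
        + (m + 5/4)) := by
      rw [hp]; field_simp; ring
    rw [this]; positivity
  rw [hx]; linarith

lemma sol_pos {n : ℕ} (hn : 3 ≤ n) {h : ℝ → ℝ}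
    (hhb : ∀ r : ℝ, 0 < r → -((n : ℝ) - 1) / r ≤ h r) {α : ℝ} (hα : 0 < α)
    {u u' u'' : ℝ → ℝ} {R : ℝ} (hR : 0 < R) (H : SolOn n h α u u' u'' (Ico 0 R)) :
    ∀ r ∈ Ioo 0 R, 0 < u r ∧ 0 < u r / 2 + r * u' r - r * u r ^ 2 / 4 := by
  obtain ⟨h1, h2, h3, h4, h5, h6⟩ := H
  have d1 : ∀ r ∈ Ioo 0 R, HasDerivAt u (u' r) r := fun r hr =>
    (h1 r ⟨hr.1.le, hr.2⟩).hasDerivAt (Ico_mem_nhds hr.1 hr.2)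
  have d2 : ∀ r ∈ Ioo 0 R, HasDerivAt u' (u'' r) r := fun r hr =>
    (h2 r ⟨hr.1.le, hr.2⟩).hasDerivAt (Ico_mem_nhds hr.1 hr.2)
  set Q : ℝ → ℝ := fun r => u r / 2 + r * u' r - r * u r ^ 2 / 4 with hQdef
  have dQ : ∀ r ∈ Ioo 0 R, HasDerivAt Q (u' r / 2 + (u' r + r * u'' r)
      - (u r ^ 2 / 4 + r * u r * u' r / 2)) r := by
    intro r hr
    have := (((d1 r hr).div_const 2).add ((hasDerivAt_id r).mul (d2 r hr))).sub
      (((hasDerivAt_id r).mul ((d1 r hr).pow 2)).div_const 4)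
    refine this.congr_deriv ?_
    simp; ring
  -- near zero
  have h0 : (0:ℝ) ∈ Ico 0 R := ⟨le_rfl, hR⟩
  have hmem : Ioo 0 R ∈ 𝓝[>] (0:ℝ) := Ioo_mem_nhdsGT hR
  have hle : 𝓝[>] (0:ℝ) ≤ 𝓝[Ico 0 R] 0 := by
    rw [nhdsWithin_Ico_eq_nhdsGE hR]; exact nhdsWithin_mono _ Ioi_subset_Ici_self
  have e1 : ∀ᶠ r in 𝓝[>] (0:ℝ), 0 < u r := by
    have hs := hasDerivWithinAt_iff_tendsto_slope.1 (h1 0 h0)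
    rw [h5] at hs
    have hle' : 𝓝[>] (0:ℝ) ≤ 𝓝[Ico 0 R \ {0}] 0 := by
      rw [Ico_sdiff_left, nhdsWithin_Ioo_eq_nhdsGT hR]
    filter_upwards [hle' (hs.eventually (lt_mem_nhds hα)), hmem] with r hr hr'
    rw [slope_def_field, h4, sub_zero, sub_zero] at hr
    have := mul_pos hr hr'.1
    rwa [div_mul_cancel₀ _ hr'.1.ne'] at this
  have e2 : ∀ᶠ r in 𝓝[>] (0:ℝ), α / 2 < u' r := by
    have := (h2 0 h0).continuousWithinAt.tendsto
    rw [h5] at this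
    exact hle (this.eventually (lt_mem_nhds (by linarith)))
  have e3 : ∀ᶠ r in 𝓝[>] (0:ℝ), u r ^ 2 / 4 < α / 2 := by
    have := (((h1 0 h0).continuousWithinAt.tendsto).pow 2).div_const 4
    rw [h4] at this
    exact hle (this.eventually (gt_mem_nhds (by simp [hα])))
  have e4 : ∀ᶠ r in 𝓝[>] (0:ℝ), 0 < u r ∧ 0 < Q r := by
    filter_upwards [e1, e2, e3, hmem] with r a b c d
    refine ⟨a, ?_⟩
    have : 0 < r * (u' r - u r ^ 2 / 4) := mul_pos d.1 (by linarith)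
    simp only [hQdef]; nlinarith
  obtain ⟨δ0, hδ0, hδ⟩ := (mem_nhdsGT_iff_exists_Ioo_subset).1 e4
  have hδ0 : 0 < δ0 := hδ0
  by_contra hcon
  push Not at hcon
  obtain ⟨r2, hr2, hr2'⟩ := hcon
  obtain ⟨δ, hδp⟩ : ∃ δ, δ ∈ Ioo 0 (min δ0 r2) := ⟨min δ0 r2 / 2, by
    have : 0 < min δ0 r2 := lt_min hδ0 hr2.1
    constructor <;> linarith⟩
  have hδδ := lt_of_lt_of_le hδp.2 (min_le_left _ _)
  have hδr := lt_of_lt_of_le hδp.2 (min_le_right _ _)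
  have hgood : ∀ r ∈ Ioc 0 δ, 0 < u r ∧ 0 < Q r := fun r hr => hδ ⟨hr.1, hr.2.trans_lt hδδ⟩
  have sub : Icc δ r2 ⊆ Ioo 0 R := fun r hr => ⟨hδp.1.trans_le hr.1, hr.2.trans_lt hr2.2⟩
  have cf : ContinuousOn (fun r => min (u r) (Q r)) (Icc δ r2) := fun r hr =>
    Filter.Tendsto.min (d1 r (sub hr)).continuousAt.continuousWithinAt
      (dQ r (sub hr)).continuousAt.continuousWithinAt
  have hcl : IsClosed {r ∈ Icc δ r2 | min (u r) (Q r) ≤ 0} :=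
    cf.preimage_isClosed_of_isClosed isClosed_Icc isClosed_Iic
  have hcomp : IsCompact {r ∈ Icc δ r2 | min (u r) (Q r) ≤ 0} :=
    isCompact_Icc.of_isClosed_subset hcl (fun r hr => hr.1)
  obtain ⟨r1, ⟨hr1, hr1'⟩, hleast⟩ := hcomp.exists_isLeast ⟨r2, ⟨hδr.le, le_rfl⟩, by
    rw [min_le_iff]
    by_cases hu : 0 < u r2
    · exact Or.inr (hr2' hu)
    · exact Or.inl (not_lt.1 hu)⟩
  have hδr1 : δ < r1 := by
    refine lt_of_le_of_ne hr1.1 ?_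
    rintro rfl
    have := hgood δ ⟨hδp.1, le_rfl⟩
    exact absurd hr1' (not_le.2 (lt_min this.1 this.2))
  have hpos : ∀ r ∈ Ico δ r1, 0 < u r ∧ 0 < Q r := by
    intro r hr
    by_contra hc
    have : r ∈ {r ∈ Icc δ r2 | min (u r) (Q r) ≤ 0} := by
      refine ⟨⟨hr.1, hr.2.le.trans hr1.2⟩, ?_⟩
      by_contra h'
      exact hc (lt_min_iff.1 (not_le.1 h'))
    exact absurd (hleast this) (not_le.2 hr.2)
  have hr1R := sub hr1
  have dv : ∀ r ∈ Ioo 0 R, HasDerivAt (fun r => r * u r) (u r + r * u' r) r := by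
    intro r hr
    refine ((hasDerivAt_id r).mul (d1 r hr)).congr_deriv ?_
    simp
  have hmono : StrictMonoOn (fun r => r * u r) (Icc δ r1) := by
    have sub' : Icc δ r1 ⊆ Ioo 0 R := fun r hr => sub ⟨hr.1, hr.2.trans hr1.2⟩
    refine strictMonoOn_of_deriv_pos (convex_Icc _ _)
      (fun r hr => (dv r (sub' hr)).continuousAt.continuousWithinAt) ?_
    intro r hr
    rw [interior_Icc] at hr
    have hrR := sub' ⟨hr.1.le, hr.2.le⟩
    rw [(dv r hrR).deriv]
    obtain ⟨a, b⟩ := hpos r ⟨hr.1.le, hr.2⟩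
    simp only [hQdef] at b
    have : 0 < r * u r ^ 2 / 4 := by have := hrR.1; positivity
    linarith
  have hu1 : 0 < u r1 := by
    have := hmono ⟨le_rfl, hδr1.le⟩ ⟨hδr1.le, le_rfl⟩ hδr1
    simp only at this
    have h' : 0 < δ * u δ := mul_pos hδp.1 (hpos δ ⟨le_rfl, hδr1⟩).1
    exact pos_of_mul_pos_right (h'.trans this) hr1R.1.le
  have hQ1 : Q r1 ≤ 0 := by
    rcases min_le_iff.1 hr1' with h' | h'
    · linarith
    · exact h'
  have hIio : ∀ᶠ r in 𝓝[<] r1, 0 < Q r := by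
    filter_upwards [Ioo_mem_nhdsLT hδr1] with r hr
    exact (hpos r ⟨hr.1.le, hr.2⟩).2
  have hQ1' : 0 ≤ Q r1 :=
    ge_of_tendsto ((dQ r1 hr1R).continuousAt.tendsto.mono_left nhdsWithin_le_nhds)
      (hIio.mono fun r hr => hr.le)
  have hQ0 : Q r1 = 0 := le_antisymm hQ1 hQ1'
  have hder := crossing_pos n _ r1 (u r1) (u' r1) (u'' r1) (h r1) (by exact_mod_cast hn) hr1R.1
    hu1 (hhb r1 hr1R.1) hQ0 rfl (h6 r1 ⟨hr1R.1.le, hr1R.2⟩ hr1R.1)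
  have hs := (hasDerivAt_iff_tendsto_slope.1 (dQ r1 hr1R)).mono_left
    (nhdsWithin_mono r1 (fun r (hr : r < r1) => ne_of_lt hr) : 𝓝[<] r1 ≤ 𝓝[≠] r1)
  obtain ⟨r, ha, hb, hc⟩ := ((hs.eventually (lt_mem_nhds hder)).and
    (hIio.and self_mem_nhdsWithin)).exists
  rw [slope_def_field, hQ0, sub_zero] at ha
  exact absurd ha (not_lt.2 (div_nonpos_of_nonneg_of_nonpos hb.le (sub_nonpos.2 (le_of_lt hc))))

lemma not_global {n : ℕ} (hn : 3 ≤ n) {h : ℝ → ℝ}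
    (hhb : ∀ r : ℝ, 0 < r → -((n : ℝ) - 1) / r ≤ h r) {α : ℝ} (hα : 0 < α)
    {u u' u'' : ℝ → ℝ} (H : SolOn n h α u u' u'' (Ici 0)) : False := by
  have hp : ∀ r, 0 < r → 0 < u r ∧ 0 < u r / 2 + r * u' r - r * u r ^ 2 / 4 := by
    intro r hr
    exact sol_pos hn hhb hα (R := r + 1) (by linarith) (H.restrict Ico_subset_Ici_self) r
      ⟨hr, by linarith⟩
  have d1 : ∀ r, 0 < r → HasDerivAt u (u' r) r := fun r hr =>
    (H.1 r hr.le).hasDerivAt (Ici_mem_nhds hr)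
  have dw : ∀ r, 0 < r → HasDerivAt (fun r => (r * u r)⁻¹ + Real.log r / 4)
      (-(u r + r * u' r) / (r * u r) ^ 2 + r⁻¹ / 4) r := by
    intro r hr
    have hne : r * u r ≠ 0 := (mul_pos hr (hp r hr).1).ne'
    have dv : HasDerivAt (fun r => r * u r) (u r + r * u' r) r := by
      refine ((hasDerivAt_id r).mul (d1 r hr)).congr_deriv ?_
      simp
    exact (dv.inv hne).add ((Real.hasDerivAt_log hr.ne').div_const 4)
  have anti : AntitoneOn (fun r => (r * u r)⁻¹ + Real.log r / 4) (Ioi 0) := by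
    refine antitoneOn_of_deriv_nonpos (convex_Ioi 0)
      (fun r hr => (dw r hr).continuousAt.continuousWithinAt)
      (fun r hr => ?_) (fun r hr => ?_)
    · rw [interior_Ioi] at hr
      exact (dw r hr).differentiableAt.differentiableWithinAt
    · rw [interior_Ioi] at hr
      have hr : 0 < r := hr
      rw [(dw r hr).deriv]
      obtain ⟨a, b⟩ := hp r hr
      have : -(u r + r * u' r) / (r * u r) ^ 2 + r⁻¹ / 4
        = -(u r + r * u' r - r * u r ^ 2 / 4) / (r * u r) ^ 2 := by field_simp; ring
      rw [this]
      apply div_nonpos_of_nonpos_of_nonneg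
      · linarith
      · positivity
  have hlim : Tendsto (fun r => Real.log r / 4) atTop atTop :=
    Real.tendsto_log_atTop.atTop_div_const (by norm_num)
  obtain ⟨r, hr1, hr2⟩ := ((hlim.eventually_gt_atTop
    ((1 * u 1)⁻¹ + Real.log 1 / 4)).and (eventually_ge_atTop 1)).exists
  have hr0 : 0 < r := by linarith
  have := anti (mem_Ioi.2 one_pos) (mem_Ioi.2 hr0) hr2
  have h' : 0 < (r * u r)⁻¹ := inv_pos.2 (mul_pos hr0 (hp r hr0).1)
  simp only at this
  linarith

/-! ### Local existence and gluing -/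

lemma glue_cont {f g : ℝ → ℝ} {R R' : ℝ} (hR' : R < R')
    (hf : ContinuousOn f (Ico 0 R)) (hlim : Tendsto f (𝓝[<] R) (𝓝 (g R)))
    (hg : ContinuousOn g (Icc R R')) :
    ContinuousOn (fun r => if r < R then f r else g r) (Ico 0 R') := by
  intro r hr
  rcases lt_trichotomy r R with h | h | h
  · have e : (fun r => if r < R then f r else g r) =ᶠ[𝓝[Ico 0 R'] r] f := by
      filter_upwards [mem_nhdsWithin_of_mem_nhds (Iio_mem_nhds h)] with x hx
      exact if_pos hx
    refine ContinuousWithinAt.congr_of_eventuallyEq ?_ e (if_pos h)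
    refine (hf r ⟨hr.1, h⟩).mono_of_mem_nhdsWithin ?_
    filter_upwards [self_mem_nhdsWithin, mem_nhdsWithin_of_mem_nhds (Iio_mem_nhds h)] with x a b
    exact ⟨a.1, b⟩
  · subst h
    have a : ContinuousWithinAt (fun x => if x < r then f x else g x) (Iio r) r := by
      unfold ContinuousWithinAt
      simp only [lt_irrefl, if_false]
      refine hlim.congr' ?_
      filter_upwards [self_mem_nhdsWithin] with x hx
      exact (if_pos hx).symm
    have b : ContinuousWithinAt (fun x => if x < r then f x else g x) (Ico r R') r := by
      refine ((hg r ⟨le_rfl, hR'.le⟩).mono Ico_subset_Icc_self).congr (fun x hx => ?_) ?_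
      · exact if_neg (not_lt.2 hx.1)
      · exact if_neg (lt_irrefl _)
    refine (a.union b).mono ?_
    intro x hx
    rcases lt_or_ge x r with h | h
    · exact Or.inl h
    · exact Or.inr ⟨h, hx.2⟩
  · have e : (fun r => if r < R then f r else g r) =ᶠ[𝓝[Ico 0 R'] r] g := by
      filter_upwards [mem_nhdsWithin_of_mem_nhds (Ioi_mem_nhds h)] with x hx
      exact if_neg (not_lt.2 (le_of_lt hx))
    refine ContinuousWithinAt.congr_of_eventuallyEq ?_ e (if_neg (not_lt.2 h.le))
    refine (hg r ⟨h.le, hr.2.le⟩).mono_of_mem_nhdsWithin ?_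
    filter_upwards [self_mem_nhdsWithin, mem_nhdsWithin_of_mem_nhds (Ioi_mem_nhds h)] with x a b
    exact ⟨le_of_lt b, a.2.le⟩

lemma glue_deriv {f g f' g' : ℝ → ℝ} {R R' : ℝ} (hR : 0 < R) (hR' : R < R')
    (hf : ∀ r ∈ Ico 0 R, HasDerivWithinAt f (f' r) (Ico 0 R) r)
    (hlim : Tendsto f (𝓝[<] R) (𝓝 (g R)))
    (hlim' : Tendsto f' (𝓝[<] R) (𝓝 (g' R)))
    (hg : ∀ r ∈ Icc R R', HasDerivWithinAt g (g' r) (Icc R R') r) :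
    ∀ r ∈ Ico 0 R', HasDerivWithinAt (fun r => if r < R then f r else g r)
      (if r < R then f' r else g' r) (Ico 0 R') r := by
  intro r hr
  have key : ∀ r < R, (fun r => if r < R then f r else g r) =ᶠ[𝓝 r] f := by
    intro r h
    filter_upwards [Iio_mem_nhds h] with x hx
    exact if_pos hx
  rcases lt_trichotomy r R with h | h | h
  · rw [if_pos h]
    refine HasDerivWithinAt.congr_of_eventuallyEq ?_ (nhdsWithin_le_nhds (key r h)) (if_pos h)
    refine (hf r ⟨hr.1, h⟩).mono_of_mem_nhdsWithin ?_
    filter_upwards [self_mem_nhdsWithin, mem_nhdsWithin_of_mem_nhds (Iio_mem_nhds h)] with x a b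
    exact ⟨a.1, b⟩
  · subst h
    rw [if_neg (lt_irrefl _)]
    have dF : ∀ x ∈ Ioo 0 r, HasDerivAt (fun x => if x < r then f x else g x) (f' x) x := by
      intro x hx
      exact ((hf x ⟨hx.1.le, hx.2⟩).hasDerivAt (Ico_mem_nhds hx.1 hx.2)).congr_of_eventuallyEq
        (key x hx.2)
    have a : HasDerivWithinAt (fun x => if x < r then f x else g x) (g' r) (Iic r) r := by
      refine hasDerivWithinAt_Iic_of_tendsto_deriv (s := Ioo 0 r)
        (fun x hx => (dF x hx).differentiableAt.differentiableWithinAt) ?_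
        (Ioo_mem_nhdsLT hR) ?_
      · unfold ContinuousWithinAt
        simp only [lt_irrefl, if_false]
        rw [nhdsWithin_Ioo_eq_nhdsLT hR]
        refine hlim.congr' ?_
        filter_upwards [self_mem_nhdsWithin] with x hx
        exact (if_pos hx).symm
      · refine hlim'.congr' ?_
        filter_upwards [Ioo_mem_nhdsLT hR] with x hx
        exact (dF x hx).deriv.symm
    have b : HasDerivWithinAt (fun x => if x < r then f x else g x) (g' r) (Ico r R') r := by
      refine ((hg r ⟨le_rfl, hR'.le⟩).mono Ico_subset_Icc_self).congr (fun x hx => ?_) ?_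
      · exact if_neg (not_lt.2 hx.1)
      · exact if_neg (lt_irrefl _)
    refine (a.union b).mono ?_
    intro x hx
    rcases lt_or_ge x r with h | h
    · exact Or.inl (le_of_lt h)
    · exact Or.inr ⟨h, hx.2⟩
  · have e : (fun r => if r < R then f r else g r) =ᶠ[𝓝[Ico 0 R'] r] g := by
      filter_upwards [mem_nhdsWithin_of_mem_nhds (Ioi_mem_nhds h)] with x hx
      exact if_neg (not_lt.2 (le_of_lt hx))
    rw [if_neg (not_lt.2 h.le)]
    refine HasDerivWithinAt.congr_of_eventuallyEq ?_ e (if_neg (not_lt.2 h.le))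
    refine (hg r ⟨h.le, hr.2.le⟩).mono_of_mem_nhdsWithin ?_
    filter_upwards [self_mem_nhdsWithin, mem_nhdsWithin_of_mem_nhds (Ioi_mem_nhds h)] with x a b
    exact ⟨le_of_lt b, a.2.le⟩

/-- Local existence to the right of `R` for a second-order equation, cubic in the unknown. -/
lemma local_exist (R x0 y0 : ℝ) (c1 c2 c3 c4 c5 : ℝ → ℝ)
    (k1 : ContinuousOn c1 (Icc R (R + 1))) (k2 : ContinuousOn c2 (Icc R (R + 1)))
    (k3 : ContinuousOn c3 (Icc R (R + 1))) (k4 : ContinuousOn c4 (Icc R (R + 1)))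
    (k5 : ContinuousOn c5 (Icc R (R + 1))) :
    ∃ R' > R, R' ≤ R + 1 ∧ ∃ x y : ℝ → ℝ, x R = x0 ∧ y R = y0 ∧
      (∀ t ∈ Icc R R', HasDerivWithinAt x (y t) (Icc R R') t) ∧
      (∀ t ∈ Icc R R', HasDerivWithinAt y (c1 t * y t + c2 t * x t ^ 3 + c3 t * x t ^ 2
        + c4 t * x t + c5 t * (x t * y t)) (Icc R R') t) := by
  obtain ⟨C1, b1⟩ := isCompact_Icc.exists_bound_of_continuousOn k1
  obtain ⟨C2, b2⟩ := isCompact_Icc.exists_bound_of_continuousOn k2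
  obtain ⟨C3, b3⟩ := isCompact_Icc.exists_bound_of_continuousOn k3
  obtain ⟨C4, b4⟩ := isCompact_Icc.exists_bound_of_continuousOn k4
  obtain ⟨C5, b5⟩ := isCompact_Icc.exists_bound_of_continuousOn k5
  simp only [Real.norm_eq_abs] at b1 b2 b3 b4 b5
  have hRm : R ∈ Icc R (R + 1) := ⟨le_rfl, by linarith⟩
  have p1 := (abs_nonneg _).trans (b1 R hRm)
  have p2 := (abs_nonneg _).trans (b2 R hRm)
  have p3 := (abs_nonneg _).trans (b3 R hRm)
  have p4 := (abs_nonneg _).trans (b4 R hRm)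
  have p5 := (abs_nonneg _).trans (b5 R hRm)
  set X := |x0| + 1 with hX
  set Y := |y0| + 1 with hY
  have hX0 : 0 < X := by positivity
  have hY0 : 0 < Y := by positivity
  set f : ℝ → ℝ × ℝ → ℝ × ℝ := fun t p => (p.2, c1 t * p.2 + c2 t * p.1 ^ 3 + c3 t * p.1 ^ 2
        + c4 t * p.1 + c5 t * (p.1 * p.2)) with hf
  have hball : ∀ p ∈ Metric.closedBall ((x0, y0) : ℝ × ℝ) ((1 : NNReal) : ℝ),
      |p.1| ≤ X ∧ |p.2| ≤ Y := by
    intro p hp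
    rw [Metric.mem_closedBall, Prod.dist_eq, max_le_iff, Real.dist_eq, Real.dist_eq] at hp
    simp only [NNReal.coe_one] at hp
    constructor
    · have := abs_sub_abs_le_abs_sub p.1 x0; linarith [hp.1]
    · have := abs_sub_abs_le_abs_sub p.2 y0; linarith [hp.2]
  have hLb : ∀ t ∈ Icc R (R + 1), ∀ p ∈ Metric.closedBall ((x0, y0) : ℝ × ℝ) ((1 : NNReal) : ℝ),
      ‖f t p‖ ≤ Y + (C1 * Y + C2 * X ^ 3 + C3 * X ^ 2 + C4 * X + C5 * (X * Y)) := by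
    intro t ht p hp
    obtain ⟨hx, hy⟩ := hball p hp
    rw [Prod.norm_def, max_le_iff, Real.norm_eq_abs, Real.norm_eq_abs]
    constructor
    · refine le_trans hy ?_
      have : 0 ≤ C1 * Y + C2 * X ^ 3 + C3 * X ^ 2 + C4 * X + C5 * (X * Y) := by positivity
      linarith
    · have e1 : |c1 t * p.2| ≤ C1 * Y := by
        rw [abs_mul]; exact mul_le_mul (b1 t ht) hy (abs_nonneg _) p1
      have e2 : |c2 t * p.1 ^ 3| ≤ C2 * X ^ 3 := by
        rw [abs_mul, abs_pow]
        exact mul_le_mul (b2 t ht) (pow_le_pow_left₀ (abs_nonneg _) hx 3) (by positivity) p2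
      have e3 : |c3 t * p.1 ^ 2| ≤ C3 * X ^ 2 := by
        rw [abs_mul, abs_pow]
        exact mul_le_mul (b3 t ht) (pow_le_pow_left₀ (abs_nonneg _) hx 2) (by positivity) p3
      have e4 : |c4 t * p.1| ≤ C4 * X := by
        rw [abs_mul]; exact mul_le_mul (b4 t ht) hx (abs_nonneg _) p4
      have e5 : |c5 t * (p.1 * p.2)| ≤ C5 * (X * Y) := by
        rw [abs_mul, abs_mul]
        exact mul_le_mul (b5 t ht) (mul_le_mul hx hy (abs_nonneg _) hX0.le) (by positivity) p5
      simp only [hf]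
      rw [abs_le] at *
      constructor <;> linarith [e1.1, e1.2, e2.1, e2.2, e3.1, e3.2, e4.1, e4.2, e5.1, e5.2]
  set L : ℝ := Y + (C1 * Y + C2 * X ^ 3 + C3 * X ^ 2 + C4 * X + C5 * (X * Y)) with hL
  have hL0 : 0 < L := by positivity
  set K : ℝ := 1 + (C1 + C2 * (3 * X ^ 2) + C3 * (2 * X) + C4 + C5 * (X + Y)) with hK
  have hK0 : 0 ≤ K := by positivity
  have hlip : ∀ t ∈ Icc R (R + 1), LipschitzOnWith (⟨K, hK0⟩ : NNReal) (f t)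
      (Metric.closedBall ((x0, y0) : ℝ × ℝ) ((1 : NNReal) : ℝ)) := by
    intro t ht
    refine LipschitzOnWith.of_dist_le_mul ?_
    intro p hp q hq
    obtain ⟨hx, hy⟩ := hball p hp
    obtain ⟨hz, hw⟩ := hball q hq
    have hd1 : |p.1 - q.1| ≤ dist p q := by
      rw [Prod.dist_eq, Real.dist_eq]; exact le_max_left _ _
    have hd2 : |p.2 - q.2| ≤ dist p q := by
      rw [Prod.dist_eq, Real.dist_eq, Real.dist_eq]; exact le_max_right _ _
    set d := dist p q with hd
    have hd0 : 0 ≤ d := dist_nonneg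
    show dist (f t p) (f t q) ≤ K * d
    rw [Prod.dist_eq, Real.dist_eq, Real.dist_eq, max_le_iff]
    simp only [hf]
    constructor
    · refine hd2.trans ?_
      have : 0 ≤ (C1 + C2 * (3 * X ^ 2) + C3 * (2 * X) + C4 + C5 * (X + Y)) * d := by positivity
      rw [hK]; linarith
    · have e1 : |c1 t * (p.2 - q.2)| ≤ C1 * d := by
        rw [abs_mul]; exact mul_le_mul (b1 t ht) hd2 (abs_nonneg _) p1
      have e2 : |c2 t * ((p.1 ^ 2 + p.1 * q.1 + q.1 ^ 2) * (p.1 - q.1))|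
          ≤ C2 * ((3 * X ^ 2) * d) := by
        rw [abs_mul, abs_mul]
        refine mul_le_mul (b2 t ht) (mul_le_mul ?_ hd1 (abs_nonneg _) (by positivity))
          (by positivity) p2
        have a1 : |p.1 ^ 2| ≤ X ^ 2 := by
          rw [abs_pow]; exact pow_le_pow_left₀ (abs_nonneg _) hx 2
        have a2 : |q.1 ^ 2| ≤ X ^ 2 := by
          rw [abs_pow]; exact pow_le_pow_left₀ (abs_nonneg _) hz 2
        have a3 : |p.1 * q.1| ≤ X ^ 2 := by
          rw [abs_mul, sq]; exact mul_le_mul hx hz (abs_nonneg _) hX0.le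
        have := abs_add_three (p.1 ^ 2) (p.1 * q.1) (q.1 ^ 2)
        linarith
      have e3 : |c3 t * ((p.1 + q.1) * (p.1 - q.1))| ≤ C3 * ((2 * X) * d) := by
        rw [abs_mul, abs_mul]
        refine mul_le_mul (b3 t ht) (mul_le_mul ?_ hd1 (abs_nonneg _) (by positivity))
          (by positivity) p3
        have := abs_add_le p.1 q.1
        linarith
      have e4 : |c4 t * (p.1 - q.1)| ≤ C4 * d := by
        rw [abs_mul]; exact mul_le_mul (b4 t ht) hd1 (abs_nonneg _) p4
      have e5 : |c5 t * (p.1 * (p.2 - q.2) + (p.1 - q.1) * q.2)| ≤ C5 * (X * d + d * Y) := by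
        rw [abs_mul]
        refine mul_le_mul (b5 t ht) ((abs_add_le _ _).trans ?_) (by positivity) p5
        rw [abs_mul, abs_mul]
        exact add_le_add (mul_le_mul hx hd2 (abs_nonneg _) hX0.le)
          (mul_le_mul hd1 hw (abs_nonneg _) hd0)
      have hsum : c1 t * p.2 + c2 t * p.1 ^ 3 + c3 t * p.1 ^ 2 + c4 t * p.1 + c5 t * (p.1 * p.2)
          - (c1 t * q.2 + c2 t * q.1 ^ 3 + c3 t * q.1 ^ 2 + c4 t * q.1 + c5 t * (q.1 * q.2))
          = c1 t * (p.2 - q.2) + c2 t * ((p.1 ^ 2 + p.1 * q.1 + q.1 ^ 2) * (p.1 - q.1))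
            + c3 t * ((p.1 + q.1) * (p.1 - q.1)) + c4 t * (p.1 - q.1)
            + c5 t * (p.1 * (p.2 - q.2) + (p.1 - q.1) * q.2) := by ring
      rw [hsum]
      have hKd : K * d = d + (C1 * d + C2 * ((3 * X ^ 2) * d) + C3 * ((2 * X) * d) + C4 * d
          + C5 * (X * d + d * Y)) := by rw [hK]; ring
      rw [hKd]
      rw [abs_le] at *
      constructor <;> linarith [e1.1, e1.2, e2.1, e2.2, e3.1, e3.2, e4.1, e4.2, e5.1, e5.2]
  have hcont : ∀ p ∈ Metric.closedBall ((x0, y0) : ℝ × ℝ) ((1 : NNReal) : ℝ),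
      ContinuousOn (f · p) (Icc R (R + 1)) := by
    intro p _
    simp only [hf]
    fun_prop
  set ε := min 1 (1 / L) with hε
  have hε0 : 0 < ε := lt_min one_pos (by positivity)
  have hεL : L * ε ≤ 1 := by
    calc L * ε ≤ L * (1 / L) := mul_le_mul_of_nonneg_left (min_le_right _ _) hL0.le
      _ = 1 := by field_simp
  have hε1 : ε ≤ 1 := min_le_left _ _
  have hsub : Icc R (R + ε) ⊆ Icc R (R + 1) := Icc_subset_Icc_right (by linarith)
  have hPL : IsPicardLindelof f (tmin := R) (tmax := R + ε) ⟨R, le_rfl, by linarith⟩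
      ((x0, y0) : ℝ × ℝ) 1 0 ⟨L, hL0.le⟩ ⟨K, hK0⟩ := by
    refine ⟨fun t ht => hlip t (hsub ht), fun p hp => (hcont p hp).mono hsub,
      fun t ht p hp => hLb t (hsub ht) p hp, ?_⟩
    show L * max (R + ε - R) (R - R) ≤ ((1 : NNReal) : ℝ) - ((0 : NNReal) : ℝ)
    rw [add_sub_cancel_left, sub_self, max_eq_left hε0.le]
    simpa using hεL
  obtain ⟨a, ha0, ha⟩ := hPL.exists_eq_forall_mem_Icc_hasDerivWithinAt₀
  refine ⟨R + ε, by linarith, by linarith, fun t => (a t).1, fun t => (a t).2, ?_, ?_, ?_, ?_⟩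
  · simp only at ha0 ⊢; rw [ha0]
  · simp only at ha0 ⊢; rw [ha0]
  · intro t ht
    exact (hasFDerivAt_fst.comp_hasDerivWithinAt t (ha t ht))
  · intro t ht
    exact (hasFDerivAt_snd.comp_hasDerivWithinAt t (ha t ht))

lemma limit_of_bdd {f f' : ℝ → ℝ} {a R C : ℝ} (haR : a < R)
    (hf : ∀ r ∈ Ioo a R, HasDerivAt f (f' r) r) (hC : ∀ r ∈ Ioo a R, |f' r| ≤ C) :
    ∃ l, Tendsto f (𝓝[<] R) (𝓝 l) := by
  have hlip : LipschitzOnWith C.toNNReal f (Ioo a R) := by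
    refine Convex.lipschitzOnWith_of_nnnorm_hasDerivWithin_le (f' := f') (convex_Ioo a R)
      (fun r hr => (hf r hr).hasDerivWithinAt) ?_
    intro r hr
    rw [← NNReal.coe_le_coe, coe_nnnorm, Real.norm_eq_abs]
    exact (hC r hr).trans (Real.le_coe_toNNReal C)
  obtain ⟨g, hg, hfg⟩ := hlip.extend_real
  refine ⟨g R, (hg.continuous.continuousAt.tendsto.mono_left nhdsWithin_le_nhds).congr' ?_⟩
  filter_upwards [Ioo_mem_nhdsLT haR] with r hr
  exact (hfg hr).symm

lemma equaz_iff {n : ℕ} {h u u' u'' : ℝ → ℝ} {r : ℝ} :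
    Equaz n h u u' u'' r ↔ u'' r = (h r - ((n : ℝ) - 1) / r) * u' r + ((n : ℝ) - 2) * u r ^ 3
      + (2 * ((n : ℝ) - 1) / r) * u r ^ 2 + (((n : ℝ) - 1) / r ^ 2 + h r / r) * u r
      + (-((n : ℝ) - 4)) * (u r * u' r) := by
  unfold Equaz
  constructor
  · intro H
    linear_combination H
  · intro H
    linear_combination H

lemma extend_of_bdd {n : ℕ} (hn : 3 ≤ n) {h : ℝ → ℝ} (hhc : ContinuousOn h (Ici 0))
    (hhb : ∀ r : ℝ, 0 < r → -((n : ℝ) - 1) / r ≤ h r) {α : ℝ} (hα : 0 < α)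
    {u u' u'' : ℝ → ℝ} {R : ℝ} (hR : 0 < R) (H : SolOn n h α u u' u'' (Ico 0 R))
    {M : ℝ} (hM : ∀ r ∈ Ioo 0 R, r * u r ≤ M) : ¬ MaximalOn n h α u R := by
  have hpos := sol_pos hn hhb hα hR H
  obtain ⟨h1, h2, h3, h4, h5, h6⟩ := H
  have hR2 : R / 2 < R := by linarith
  have sub0 : Ioo (R / 2) R ⊆ Ioo 0 R := Ioo_subset_Ioo_left (by linarith)
  have d1 : ∀ r ∈ Ioo (R / 2) R, HasDerivAt u (u' r) r := fun r hr =>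
    (h1 r ⟨(sub0 hr).1.le, hr.2⟩).hasDerivAt (Ico_mem_nhds (sub0 hr).1 hr.2)
  have d2 : ∀ r ∈ Ioo (R / 2) R, HasDerivAt u' (u'' r) r := fun r hr =>
    (h2 r ⟨(sub0 hr).1.le, hr.2⟩).hasDerivAt (Ico_mem_nhds (sub0 hr).1 hr.2)
  -- coefficients
  set c1 : ℝ → ℝ := fun r => h r - ((n : ℝ) - 1) / r with hc1
  set c2 : ℝ → ℝ := fun _ => (n : ℝ) - 2 with hc2
  set c3 : ℝ → ℝ := fun r => 2 * ((n : ℝ) - 1) / r with hc3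
  set c4 : ℝ → ℝ := fun r => ((n : ℝ) - 1) / r ^ 2 + h r / r with hc4
  set c5 : ℝ → ℝ := fun _ => -((n : ℝ) - 4) with hc5
  have hh : ContinuousOn h (Ioi 0) := hhc.mono Ioi_subset_Ici_self
  have hne : ∀ r ∈ Ioi (0 : ℝ), r ≠ 0 := fun r hr => ne_of_gt hr
  have k1 : ContinuousOn c1 (Ioi 0) :=
    hh.sub (continuousOn_const.div continuousOn_id hne)
  have k2 : ContinuousOn c2 (Ioi 0) := continuousOn_const
  have k3 : ContinuousOn c3 (Ioi 0) := continuousOn_const.div continuousOn_id hne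
  have k4 : ContinuousOn c4 (Ioi 0) :=
    (continuousOn_const.div (continuousOn_id.pow 2) (fun r hr => pow_ne_zero 2 (hne r hr))).add
      (hh.div continuousOn_id hne)
  have k5 : ContinuousOn c5 (Ioi 0) := continuousOn_const
  have hode : ∀ r ∈ Ioo 0 R, u'' r = c1 r * u' r + c2 r * u r ^ 3 + c3 r * u r ^ 2
      + c4 r * u r + c5 r * (u r * u' r) := fun r hr =>
    equaz_iff.1 (h6 r ⟨hr.1.le, hr.2⟩ hr.1)
  -- bounds for u
  set U := 2 * M / R with hU
  have bu : ∀ r ∈ Ioo (R / 2) R, u r ∈ Icc 0 U := by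
    intro r hr
    have p := (hpos r (sub0 hr)).1
    refine ⟨p.le, ?_⟩
    rw [hU, le_div_iff₀ hR]
    have := hM r (sub0 hr)
    nlinarith [hr.1]
  -- bounds for the coefficients
  have hcomp : IsCompact (Icc (R / 2) R ×ˢ Icc 0 U) := isCompact_Icc.prod isCompact_Icc
  have hmaps : MapsTo Prod.fst (Icc (R / 2) R ×ˢ Icc 0 U) (Ioi (0 : ℝ)) := fun p hp =>
    lt_of_lt_of_le (by linarith : 0 < R / 2) hp.1.1
  have m1 := k1.comp continuousOn_fst hmaps
  have m2 := k2.comp continuousOn_fst hmaps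
  have m3 := k3.comp continuousOn_fst hmaps
  have m4 := k4.comp continuousOn_fst hmaps
  have m5 := k5.comp continuousOn_fst hmaps
  have ms : ContinuousOn Prod.snd (Icc (R / 2) R ×ˢ Icc 0 U) := continuousOn_snd
  obtain ⟨A, hA⟩ := hcomp.exists_bound_of_continuousOn (m1.add (m5.mul ms))
  obtain ⟨B, hB⟩ := hcomp.exists_bound_of_continuousOn
    (((m2.mul (ms.pow 3)).add (m3.mul (ms.pow 2))).add (m4.mul ms))
  have hu2 : ∀ r ∈ Ioo (R / 2) R, |u'' r| ≤ A * |u' r| + B := by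
    intro r hr
    have hin : (r, u r) ∈ Icc (R / 2) R ×ˢ Icc 0 U := ⟨⟨hr.1.le, hr.2.le⟩, bu r hr⟩
    have a := hA _ hin
    have b := hB _ hin
    rw [Real.norm_eq_abs] at a b
    have e : u'' r = (c1 r + c5 r * u r) * u' r
        + (c2 r * u r ^ 3 + c3 r * u r ^ 2 + c4 r * u r) := by
      rw [hode r (sub0 hr)]; ring
    rw [e]
    refine (abs_add_le _ _).trans (add_le_add ?_ b)
    rw [abs_mul]
    exact mul_le_mul_of_nonneg_right a (abs_nonneg _)
  have hmid : (3 * R / 4) ∈ Ioo (R / 2) R := ⟨by linarith, by linarith⟩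
  have hA0 : 0 ≤ A := (norm_nonneg _).trans (hA (3 * R / 4, u (3 * R / 4))
    ⟨⟨hmid.1.le, hmid.2.le⟩, bu _ hmid⟩)
  have hU0 : 0 ≤ U := (bu _ hmid).1.trans (bu _ hmid).2
  have hlow : ∀ r ∈ Ioo (R / 2) R, -(U / R) ≤ u' r := by
    intro r hr
    have hq := (hpos r (sub0 hr)).2
    have hr0 := (sub0 hr).1
    have q1 : 0 ≤ r * u r ^ 2 / 4 := by positivity
    have q2 : -(u r / 2) ≤ r * u' r := by linarith
    have q3 := (bu r hr).2
    have q4 : r * (U / R) ≥ U / 2 := by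
      have : (R / 2) * (U / R) ≤ r * (U / R) :=
        mul_le_mul_of_nonneg_right hr.1.le (by positivity)
      have e : (R / 2) * (U / R) = U / 2 := by field_simp
      linarith
    by_contra hc
    have := mul_lt_mul_of_pos_left (not_le.1 hc) hr0
    linarith
  set B' := A * (2 * (U / R)) + B with hB'
  have hUR : 0 ≤ U / R := by positivity
  have hu2' : ∀ r ∈ Ioo (R / 2) R, u'' r ≤ A * u' r + B' := by
    intro r hr
    have a1 : |u' r| ≤ u' r + 2 * (U / R) := by
      rw [abs_le]; constructor <;> linarith [hlow r hr]
    have a2 := mul_le_mul_of_nonneg_left a1 hA0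
    have a3 := (le_abs_self _).trans (hu2 r hr)
    rw [hB']; linarith
  have dw : ∀ r ∈ Ioo (R / 2) R, HasDerivAt (fun r => u' r - A * u r - B' * r)
      (u'' r - A * u' r - B' * 1) r := fun r hr =>
    ((d2 r hr).sub ((d1 r hr).const_mul A)).sub ((hasDerivAt_id r).const_mul B')
  have anti : AntitoneOn (fun r => u' r - A * u r - B' * r) (Ioo (R / 2) R) := by
    refine antitoneOn_of_deriv_nonpos (convex_Ioo _ _)
      (fun r hr => (dw r hr).continuousAt.continuousWithinAt)
      (fun r hr => ?_) (fun r hr => ?_)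
    · rw [interior_Ioo] at hr
      exact (dw r hr).differentiableAt.differentiableWithinAt
    · rw [interior_Ioo] at hr
      rw [(dw r hr).deriv]
      linarith [hu2' r hr]
  set W := u' (3 * R / 4) - A * u (3 * R / 4) - B' * (3 * R / 4) with hW
  have sub1 : Ioo (3 * R / 4) R ⊆ Ioo (R / 2) R := Ioo_subset_Ioo_left (by linarith)
  have hup : ∀ r ∈ Ioo (3 * R / 4) R, |u' r| ≤ |W| + A * U + |B'| * R + U / R := by
    intro r hr
    have a := anti hmid (sub1 hr) hr.1.le
    simp only at a
    rw [← hW] at a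
    have b := mul_le_mul_of_nonneg_left (bu r (sub1 hr)).2 hA0
    have c : B' * r ≤ |B'| * R :=
      mul_le_mul (le_abs_self _) hr.2.le (sub0 (sub1 hr)).1.le (abs_nonneg _)
    have d := le_abs_self W
    have e := hlow r (sub1 hr)
    have p1 : 0 ≤ A * U := by positivity
    have p2 : 0 ≤ |B'| * R := by positivity
    rw [abs_le]; constructor <;> linarith [abs_nonneg W]
  have hup2 : ∀ r ∈ Ioo (3 * R / 4) R,
      |u'' r| ≤ A * (|W| + A * U + |B'| * R + U / R) + B := by
    intro r hr
    have := hu2 r (sub1 hr)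
    have := mul_le_mul_of_nonneg_left (hup r hr) hA0
    linarith
  obtain ⟨x0, hx0⟩ := limit_of_bdd hmid.2 (fun r hr => d1 r (sub1 hr)) hup
  obtain ⟨y0, hy0⟩ := limit_of_bdd hmid.2 (fun r hr => d2 r (sub1 hr)) hup2
  have subI : ∀ R', Icc R R' ⊆ Ioi (0 : ℝ) := fun R' r hr => hR.trans_le hr.1
  obtain ⟨R', hRR', -, x, y, hx, hy, dx, dy⟩ := local_exist R x0 y0 c1 c2 c3 c4 c5
    (k1.mono (subI _)) (k2.mono (subI _)) (k3.mono (subI _)) (k4.mono (subI _)) (k5.mono (subI _))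
  have hRR' : R < R' := hRR'
  set z : ℝ → ℝ := fun t => c1 t * y t + c2 t * x t ^ 3 + c3 t * x t ^ 2
        + c4 t * x t + c5 t * (x t * y t) with hz
  have cx : ContinuousOn x (Icc R R') := fun t ht => (dx t ht).continuousWithinAt
  have cy : ContinuousOn y (Icc R R') := fun t ht => (dy t ht).continuousWithinAt
  have cz : ContinuousOn z (Icc R R') :=
    (((((k1.mono (subI _)).mul cy).add ((k2.mono (subI _)).mul (cx.pow 3))).add
      ((k3.mono (subI _)).mul (cx.pow 2))).add ((k4.mono (subI _)).mul cx)).add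
      ((k5.mono (subI _)).mul (cx.mul cy))
  have tc : ∀ c : ℝ → ℝ, ContinuousOn c (Ioi 0) → Tendsto c (𝓝[<] R) (𝓝 (c R)) := fun c hc =>
    ((hc R hR).continuousAt (Ioi_mem_nhds hR)).tendsto.mono_left nhdsWithin_le_nhds
  rw [← hx] at hx0
  rw [← hy] at hy0
  have hz0 : Tendsto u'' (𝓝[<] R) (𝓝 (z R)) := by
    have : Tendsto (fun r => c1 r * u' r + c2 r * u r ^ 3 + c3 r * u r ^ 2
      + c4 r * u r + c5 r * (u r * u' r)) (𝓝[<] R) (𝓝 (z R)) :=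
      (((((tc _ k1).mul hy0).add ((tc _ k2).mul (hx0.pow 3))).add
        ((tc _ k3).mul (hx0.pow 2))).add ((tc _ k4).mul hx0)).add
        ((tc _ k5).mul (hx0.mul hy0))
    refine this.congr' ?_
    filter_upwards [Ioo_mem_nhdsLT hR] with r hr
    exact (hode r hr).symm
  intro hmax
  refine hmax ⟨R', fun r => if r < R then u r else x r, fun r => if r < R then u' r else y r,
    fun r => if r < R then u'' r else z r, hRR', ⟨?_, ?_, ?_, ?_, ?_, ?_⟩, ?_⟩
  · exact glue_deriv hR hRR' h1 hx0 hy0 dx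
  · exact glue_deriv hR hRR' h2 hy0 hz0 dy
  · exact glue_cont hRR' h3 hz0 cz
  · simp only [if_pos hR, h4]
  · simp only [if_pos hR, h5]
  · intro r hr hr0
    rw [equaz_iff]
    by_cases hlt : r < R
    · simp only [if_pos hlt]
      exact hode r ⟨hr0, hlt⟩
    · simp only [if_neg hlt]
      rfl
  · intro r hr
    exact if_pos hr.2

/-- **Theorem (nonexistence).** For `n ≥ 3`, `h` continuous on `[0,∞)` with
    `h(r) ≥ -(n-1)/r` for `r > 0`, and `α > 0`, the solution of (equaz) with
    `u(0) = 0`, `u'(0) = α` is not global: there is no solution on all of `[0,∞)`,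
    and a solution on a maximal interval `[0,R)` (necessarily `R < ∞`) satisfies
    `u(r) → +∞` as `r ↑ R`. -/
theorem nonexistence_alpha_pos (n : ℕ) (hn : 3 ≤ n) (h : ℝ → ℝ)
    (hhc : ContinuousOn h (Set.Ici 0))
    (hhb : ∀ r : ℝ, 0 < r → -((n : ℝ) - 1) / r ≤ h r)
    (α : ℝ) (hα : 0 < α) :
    (¬ ∃ u u' u'' : ℝ → ℝ, SolOn n h α u u' u'' (Set.Ici 0)) ∧
    (∀ (u u' u'' : ℝ → ℝ) (R : ℝ), 0 < R →
      SolOn n h α u u' u'' (Set.Ico 0 R) → MaximalOn n h α u R →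
      Filter.Tendsto u (nhdsWithin R (Set.Iio R)) Filter.atTop) := by
  refine ⟨fun ⟨u, u', u'', H⟩ => not_global hn hhb hα H, ?_⟩
  intro u u' u'' R hR H hmax
  have hpos := sol_pos hn hhb hα hR H
  have hunb : ∀ M : ℝ, ∃ r ∈ Ioo 0 R, M < r * u r := by
    by_contra hcon
    push Not at hcon
    obtain ⟨M, hM⟩ := hcon
    exact extend_of_bdd hn hhc hhb hα hR H hM hmax
  have dv : ∀ r ∈ Ioo 0 R, HasDerivAt (fun r => r * u r) (u r + r * u' r) r := by
    intro r hr
    have d1 : HasDerivAt u (u' r) r :=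
      (H.1 r ⟨hr.1.le, hr.2⟩).hasDerivAt (Ico_mem_nhds hr.1 hr.2)
    refine ((hasDerivAt_id r).mul d1).congr_deriv ?_
    simp
  have hmono : StrictMonoOn (fun r => r * u r) (Ioo 0 R) := by
    refine strictMonoOn_of_deriv_pos (convex_Ioo _ _)
      (fun r hr => (dv r hr).continuousAt.continuousWithinAt) ?_
    intro r hr
    rw [interior_Ioo] at hr
    rw [(dv r hr).deriv]
    obtain ⟨a, b⟩ := hpos r hr
    have : 0 < r * u r ^ 2 / 4 := by have := hr.1; positivity
    linarith
  rw [tendsto_atTop]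
  intro b
  obtain ⟨r0, hr0, hb⟩ := hunb (|b| * R)
  filter_upwards [Ioo_mem_nhdsLT hr0.2] with r hr
  have hr' : r ∈ Ioo 0 R := ⟨hr0.1.trans hr.1, hr.2⟩
  have hm := hmono hr0 hr' hr.1
  simp only at hm
  have hu := (hpos r hr').1
  by_contra hc
  have h1 : u r ≤ |b| := (not_le.1 hc).le.trans (le_abs_self b)
  have h2 : r * u r ≤ R * |b| := mul_le_mul hr.2.le h1 hu.le hR.le
  linarith
end

section
/- Let n ≥ 3 be an integer and let h be a continuous function on [0,∞) satisfying h(r) ≥ -(n-1)/r for all r > 0. Then any global C² solution u of the ODE u''(r) + ((n-1)/r)u'(r) − (n-2)u(r)³ − (2(n-1)/r)u(r)² − ((n-1)/r²)u(r) + (n-4)u(r)u'(r) = [u'(r) + u(r)/r]·h(r) on [0,∞) with u(0) = 0 and u'(0) = α ≠ 0 is necessarily strictly negative: u(r) < 0 for all r > 0. -/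
/-- First zero of a continuous function that starts positive. -/
lemma first_zero_aux (F : ℝ → ℝ) (a b : ℝ) (hab : a ≤ b) (hF : ContinuousOn F (Set.Icc a b))
    (ha : 0 < F a) (hb : F b ≤ 0) :
    ∃ s, a < s ∧ s ≤ b ∧ F s = 0 ∧ ∀ r, a ≤ r → r < s → 0 < F r := by
  have hcl : IsClosed (Set.Icc a b ∩ F ⁻¹' Set.Iic 0) :=
    hF.preimage_isClosed_of_isClosed isClosed_Icc isClosed_Iic
  set Z := Set.Icc a b ∩ F ⁻¹' Set.Iic 0 with hZ
  have hne : Z.Nonempty := ⟨b, ⟨hab, le_rfl⟩, hb⟩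
  have hbd : BddBelow Z := ⟨a, fun x hx => hx.1.1⟩
  have hs : sInf Z ∈ Z := hcl.csInf_mem hne hbd
  set s := sInf Z with hsdef
  have hpos : ∀ r, a ≤ r → r < s → 0 < F r := by
    intro r h1 h2
    by_contra hc
    have : r ∈ Z := ⟨⟨h1, h2.le.trans hs.1.2⟩, not_lt.mp hc⟩
    exact absurd (csInf_le hbd this) (not_le.mpr h2)
  have has : a < s := by
    rcases hs.1.1.lt_or_eq with h | h
    · exact h
    · have := hs.2
      rw [← h] at this
      exact absurd ha (not_lt.mpr this)
  refine ⟨s, has, hs.1.2, le_antisymm hs.2 ?_, hpos⟩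
  by_contra hc
  push Not at hc
  obtain ⟨c, hc1, hc2⟩ := intermediate_value_Icc' has.le
    (hF.mono (Set.Icc_subset_Icc le_rfl hs.1.2)) (show F s / 2 ∈ Set.Icc (F s) (F a) from
      ⟨by linarith, by linarith⟩)
  rcases hc1.2.lt_or_eq with h | h
  · have := hpos c hc1.1 h
    linarith
  · rw [h] at hc2
    linarith

/-- At a first zero, reached from positive values, the derivative is nonpositive. -/
lemma deriv_first_zero_aux (F : ℝ → ℝ) (a s d : ℝ) (has : a < s) (hd : HasDerivAt F d s)
    (h0 : F s = 0) (hp : ∀ r, a ≤ r → r < s → 0 < F r) : d ≤ 0 := by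
  have h1 := hd.hasDerivWithinAt (s := Set.Iio s)
  rw [hasDerivWithinAt_iff_tendsto_slope' (by simp)] at h1
  refine le_of_tendsto h1 ?_
  have : ∀ᶠ r in nhdsWithin s (Set.Iio s), r ∈ Set.Ioo a s := Ioo_mem_nhdsLT has
  filter_upwards [this] with r hr
  rw [slope_def_field, h0]
  have := hp r hr.1.le hr.2
  apply div_nonpos_of_nonneg_of_nonpos
  · linarith
  · linarith [hr.2]

/-- Blow-up for the autonomous-type system. -/
lemma blowup_aux (n a : ℝ) (hn : 3 ≤ n) (ha : 0 < a) (v p H : ℝ → ℝ)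
    (hv : ∀ r, a ≤ r → HasDerivAt v (p r / r) r)
    (hp : ∀ r, a ≤ r → HasDerivAt p
      (((H r - (n - 4) * (1 + v r)) * p r + (n - 2) * v r * (v r + 1) * (v r + 2)) / r) r)
    (hH : ∀ r, a ≤ r → -(n - 1) ≤ H r) (hva : 0 < v a) (hpa : 0 < p a) : False := by
  obtain ⟨e, he0, he1, he2⟩ : ∃ e : ℝ, 0 < e ∧ e ≤ 1 / 4 ∧ e * v a ^ 2 < p a := by
    refine ⟨min (1 / 4) (p a / (2 * v a ^ 2)), by positivity, min_le_left _ _, ?_⟩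
    have : min (1 / 4) (p a / (2 * v a ^ 2)) ≤ p a / (2 * v a ^ 2) := min_le_right _ _
    calc _ ≤ p a / (2 * v a ^ 2) * v a ^ 2 := by gcongr
      _ = p a / 2 := by field_simp
      _ < p a := by linarith
  set F : ℝ → ℝ := fun r => p r - e * v r ^ 2 with hFdef
  have hFd : ∀ r, a ≤ r → HasDerivAt F
      (((H r - (n - 4) * (1 + v r)) * p r + (n - 2) * v r * (v r + 1) * (v r + 2)) / r
        - e * (2 * v r * (p r / r))) r := by
    intro r hr
    have := (hp r hr).sub (((hv r hr).pow 2).const_mul e)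
    refine HasDerivAt.congr_deriv this ?_
    simp
  have hvc : ∀ b, ContinuousOn v (Set.Icc a b) := fun b r hr =>
    (hv r hr.1).continuousAt.continuousWithinAt
  -- monotonicity of v while F is positive
  have hmono : ∀ s, a ≤ s → (∀ r, a ≤ r → r < s → 0 < F r) → v a ≤ v s := by
    intro s has hF
    have : MonotoneOn v (Set.Icc a s) := by
      apply monotoneOn_of_deriv_nonneg (convex_Icc a s) (hvc s)
      · intro r hr
        rw [interior_Icc] at hr
        exact (hv r hr.1.le).differentiableAt.differentiableWithinAt
      · intro r hr
        rw [interior_Icc] at hr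
        rw [(hv r hr.1.le).deriv]
        have h1 := hF r hr.1.le hr.2
        have h2 : 0 < r := ha.trans hr.1
        have h3 : 0 ≤ p r := by
          simp only [hFdef] at h1
          nlinarith [sq_nonneg (v r)]
        positivity
    exact this ⟨le_rfl, has⟩ ⟨has, le_rfl⟩ has
  have hFpos : ∀ r, a ≤ r → 0 < F r := by
    intro b hb
    by_contra hc
    push Not at hc
    obtain ⟨s, has, hsb, hs0, hsp⟩ := first_zero_aux F a b hb
      (fun r hr => (hFd r hr.1).continuousAt.continuousWithinAt)
      (by simp only [hFdef]; linarith) hc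
    have hd := deriv_first_zero_aux F a s _ has (hFd s has.le) hs0 hsp
    have hvs : 0 < v s := hva.trans_le (hmono s has.le hsp)
    have hs : 0 < s := ha.trans has
    have hps : p s = e * v s ^ 2 := by simp only [hFdef] at hs0; linarith
    rw [hps] at hd
    have hHs := hH s has.le
    have e1 : ((H s - (n - 4) * (1 + v s)) * (e * v s ^ 2)
        + (n - 2) * v s * (v s + 1) * (v s + 2)) / s - e * (2 * v s * (e * v s ^ 2 / s))
      = v s / s * ((H s + (n - 1)) * (e * v s) + (n - 2) * 2
          + v s * (3 * (n - 2) - (2 * n - 5) * e)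
          + v s ^ 2 * ((n - 2) - (n - 4) * e - 2 * e ^ 2)) := by
      field_simp
      ring
    rw [e1] at hd
    have h1 : 0 ≤ (H s + (n - 1)) * (e * v s) :=
      mul_nonneg (by linarith) (by positivity)
    have h2 : 0 ≤ v s * (3 * (n - 2) - (2 * n - 5) * e) :=
      mul_nonneg hvs.le (by nlinarith)
    have h3 : 0 ≤ v s ^ 2 * ((n - 2) - (n - 4) * e - 2 * e ^ 2) :=
      mul_nonneg (by positivity) (by nlinarith)
    have h4 : 0 < v s / s := by positivity
    nlinarith [mul_pos h4 (show 0 < (H s + (n - 1)) * (e * v s) + (n - 2) * 2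
          + v s * (3 * (n - 2) - (2 * n - 5) * e)
          + v s ^ 2 * ((n - 2) - (n - 4) * e - 2 * e ^ 2) by linarith)]
  have hvpos : ∀ r, a ≤ r → 0 < v r := fun r hr =>
    hva.trans_le (hmono r hr fun t ht _ => hFpos t ht)
  have hGd : ∀ r, a ≤ r → HasDerivAt (fun r => (v r)⁻¹ + e * Real.log r)
      (-(p r / r) / v r ^ 2 + e * r⁻¹) r := by
    intro r hr
    exact ((hv r hr).inv (hvpos r hr).ne').add
      ((Real.hasDerivAt_log (ha.trans_le hr).ne').const_mul e)
  have hanti : AntitoneOn (fun r => (v r)⁻¹ + e * Real.log r) (Set.Ici a) := by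
    apply antitoneOn_of_deriv_nonpos (convex_Ici a)
    · exact fun r hr => (hGd r hr).continuousAt.continuousWithinAt
    · intro r hr
      rw [interior_Ici] at hr
      exact (hGd r (le_of_lt hr)).differentiableAt.differentiableWithinAt
    · intro r hr
      rw [interior_Ici] at hr
      have hr' : a ≤ r := le_of_lt hr
      rw [(hGd r hr').deriv]
      have h1 := hvpos r hr'
      have h2 := hFpos r hr'
      have h3 : 0 < r := ha.trans_le hr'
      have e1 : -(p r / r) / v r ^ 2 + e * r⁻¹ = -(F r / (r * v r ^ 2)) := by
        simp only [hFdef]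
        field_simp
        ring
      rw [e1]
      have : 0 < F r / (r * v r ^ 2) := by positivity
      linarith
  have htend := Real.tendsto_log_atTop.const_mul_atTop he0
  obtain ⟨r, hr1, hr2⟩ := ((htend.eventually_gt_atTop ((v a)⁻¹ + e * Real.log a)).and
    (Filter.eventually_ge_atTop a)).exists
  have h1 := hanti (Set.self_mem_Ici) (show r ∈ Set.Ici a from hr2) hr2
  have h2 : 0 < (v r)⁻¹ := inv_pos.mpr (hvpos r hr2)
  simp only at h1
  linarith

/-- Small-step lemma: just after a zero with positive slope. -/
lemma step_aux (u u' : ℝ → ℝ) (c : ℝ) (hc : 0 ≤ c)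
    (hu : ∀ r ∈ Set.Ici (0 : ℝ), HasDerivWithinAt u (u' r) (Set.Ici 0) r)
    (hu' : ContinuousOn u' (Set.Ici 0)) (h0 : u c = 0) (h1 : 0 < u' c) :
    ∃ δ, 0 < δ ∧ ∀ b, c < b → b < c + δ → 0 < u b ∧ 0 < u' b := by
  have hev : ∀ᶠ r in nhdsWithin c (Set.Ici 0), 0 < u' r :=
    (hu' c hc).eventually (lt_mem_nhds h1)
  obtain ⟨δ, hδ, hball⟩ := Metric.mem_nhdsWithin_iff.mp hev
  have key : ∀ b, c ≤ b → b < c + δ → 0 < u' b := by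
    intro b hb1 hb2
    apply hball
    refine ⟨?_, hc.trans hb1⟩
    rw [Metric.mem_ball, Real.dist_eq, abs_of_nonneg (by linarith)]
    linarith
  refine ⟨δ, hδ, fun b hb1 hb2 => ⟨?_, key b hb1.le hb2⟩⟩
  have : StrictMonoOn u (Set.Icc c b) := by
    apply strictMonoOn_of_deriv_pos (convex_Icc c b)
    · intro r hr
      exact (hu r (hc.trans hr.1)).continuousWithinAt.mono
        (fun x hx => hc.trans hx.1)
    · intro r hr
      rw [interior_Icc] at hr
      have hr0 : 0 < r := hc.trans_lt hr.1
      rw [((hu r hr0.le).hasDerivAt (Ici_mem_nhds hr0)).deriv]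
      exact key r hr.1.le (hr.2.trans hb2)
  have := this ⟨le_rfl, hb1.le⟩ ⟨hb1.le, le_rfl⟩ hb1
  linarith

/-- Backward uniqueness for a linear second order equation with bounded coefficients. -/
lemma unique_aux (u u' A B : ℝ → ℝ) (a s : ℝ) (has : a < s)
    (hu : ∀ r ∈ Set.Icc a s, HasDerivAt u (u' r) r)
    (hu' : ∀ r ∈ Set.Icc a s, HasDerivAt u' (A r * u r + B r * u' r) r)
    (hA : ContinuousOn A (Set.Icc a s)) (hB : ContinuousOn B (Set.Icc a s))
    (h0 : u s = 0) (h1 : u' s = 0) : u a = 0 := by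
  obtain ⟨M, hM⟩ := isCompact_Icc.exists_bound_of_continuousOn hA
  obtain ⟨N, hN⟩ := isCompact_Icc.exists_bound_of_continuousOn hB
  set K := 1 + M + 2 * N with hK
  have hd : ∀ r ∈ Set.Icc a s, HasDerivAt (fun r => (u r ^ 2 + u' r ^ 2) * Real.exp (K * r))
      ((2 * u r * u' r + 2 * u' r * (A r * u r + B r * u' r)) * Real.exp (K * r)
        + (u r ^ 2 + u' r ^ 2) * (Real.exp (K * r) * K)) r := by
    intro r hr
    have h2 : HasDerivAt (fun r => Real.exp (K * r)) (Real.exp (K * r) * K) r := by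
      simpa using ((hasDerivAt_id r).const_mul K).exp
    have := (((hu r hr).pow 2).add ((hu' r hr).pow 2)).mul h2
    refine HasDerivAt.congr_deriv this ?_
    simp
  have hmono : MonotoneOn (fun r => (u r ^ 2 + u' r ^ 2) * Real.exp (K * r)) (Set.Icc a s) := by
    apply monotoneOn_of_deriv_nonneg (convex_Icc a s)
    · exact fun r hr => (hd r hr).continuousAt.continuousWithinAt
    · exact fun r hr => (hd r (interior_subset hr)).differentiableAt.differentiableWithinAt
    · intro r hr
      have hr' := interior_subset hr
      rw [(hd r hr').deriv]
      have hM' := abs_le.mp (hM r hr')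
      have hN' := abs_le.mp (hN r hr')
      have e1 : (2 * u r * u' r + 2 * u' r * (A r * u r + B r * u' r)) * Real.exp (K * r)
        + (u r ^ 2 + u' r ^ 2) * (Real.exp (K * r) * K) = Real.exp (K * r) *
          ((u r + u' r) ^ 2 + (M + A r) / 2 * (u r + u' r) ^ 2
            + (M - A r) / 2 * (u r - u' r) ^ 2
            + 2 * (N + B r) * u' r ^ 2 + 2 * N * u r ^ 2) := by
        rw [hK]; ring
      rw [e1]
      have p1 : 0 ≤ (M + A r) / 2 := by linarith
      have p2 : 0 ≤ (M - A r) / 2 := by linarith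
      have p3 : 0 ≤ N + B r := by linarith
      have p4 : 0 ≤ N := by linarith
      positivity
  have h2 := hmono ⟨le_rfl, has.le⟩ ⟨has.le, le_rfl⟩ has.le
  simp only [h0, h1] at h2
  have h3 := Real.exp_pos (K * a)
  have h4 : u a ^ 2 + u' a ^ 2 ≤ 0 := by
    by_contra hc
    push Not at hc
    have := mul_pos hc h3
    simp at h2
    linarith
  have h5 : u a ^ 2 = 0 := by nlinarith [sq_nonneg (u a), sq_nonneg (u' a)]
  exact pow_eq_zero_iff (two_ne_zero) |>.mp h5

theorem global_solutions_are_negative (n : ℕ) (hn : 3 ≤ n) (h : ℝ → ℝ)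
    (hhc : ContinuousOn h (Set.Ici 0))
    (hhb : ∀ r : ℝ, 0 < r → -((n : ℝ) - 1) / r ≤ h r)
    (α : ℝ) (hα : α ≠ 0) (u u' u'' : ℝ → ℝ)
    (hu : SolOn n h α u u' u'' (Set.Ici 0)) :
    ∀ r : ℝ, 0 < r → u r < 0 := by
  obtain ⟨hd1, hd2, _, hu0, hu'0, heq⟩ := hu
  have hn' : (3 : ℝ) ≤ n := by exact_mod_cast hn
  have hD1 : ∀ r, 0 < r → HasDerivAt u (u' r) r := fun r hr =>
    (hd1 r hr.le).hasDerivAt (Ici_mem_nhds hr)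
  have hD2 : ∀ r, 0 < r → HasDerivAt u' (u'' r) r := fun r hr =>
    (hd2 r hr.le).hasDerivAt (Ici_mem_nhds hr)
  have hc1 : ContinuousOn u (Set.Ici 0) := fun r hr => (hd1 r hr).continuousWithinAt
  have hc2 : ContinuousOn u' (Set.Ici 0) := fun r hr => (hd2 r hr).continuousWithinAt
  -- no point with u > 0, u' > 0
  have hblow : ∀ a, 0 < a → 0 < u a → 0 < u' a → False := by
    intro a ha h1 h2
    refine blowup_aux n a hn' ha (fun r => r * u r) (fun r => r * u r + r ^ 2 * u' r)
      (fun r => r * h r) ?_ ?_ ?_ (by positivity) (by positivity)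
    · intro r hr
      have hr0 := ha.trans_le hr
      refine HasDerivAt.congr_deriv ((hasDerivAt_id r).mul (hD1 r hr0)) ?_
      simp only [id]
      field_simp
    · intro r hr
      have hr0 := ha.trans_le hr
      have := ((hasDerivAt_id r).mul (hD1 r hr0)).add
        (((hasDerivAt_id r).pow 2).mul (hD2 r hr0))
      refine HasDerivAt.congr_deriv this ?_
      have hE := heq r hr0.le hr0
      unfold Equaz at hE
      have hu2 : u'' r = (u' r + u r / r) * h r - (((n : ℝ) - 1) / r * u' r
        - ((n : ℝ) - 2) * u r ^ 3 - 2 * ((n : ℝ) - 1) / r * u r ^ 2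
        - ((n : ℝ) - 1) / r ^ 2 * u r + ((n : ℝ) - 4) * u r * u' r) := by linarith
      rw [hu2]
      simp
      field_simp
      ring
    · intro r hr
      have hr0 := ha.trans_le hr
      have := hhb r hr0
      rw [div_le_iff₀ hr0] at this
      linarith
  have hstep : ∀ c, 0 ≤ c → u c = 0 → 0 < u' c → False := by
    intro c hc h0 h1
    obtain ⟨δ, hδ, hb⟩ := step_aux u u' c hc hd1 hc2 h0 h1
    obtain ⟨h2, h3⟩ := hb (c + δ / 2) (by linarith) (by linarith)
    exact hblow _ (by linarith) h2 h3
  have hneg : α < 0 := by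
    rcases lt_or_gt_of_ne hα with h1 | h1
    · exact h1
    · exact (hstep 0 le_rfl hu0 (by rw [hu'0]; exact h1)).elim
  intro b hb
  by_contra hcon
  push Not at hcon
  obtain ⟨δ, hδ, hst⟩ := step_aux (fun r => -u r) (fun r => -u' r) 0 le_rfl
    (fun r hr => (hd1 r hr).neg) hc2.neg (by simp [hu0]) (by simp only [hu'0]; linarith)
  obtain ⟨a, ha0, hab, haδ⟩ : ∃ a, 0 < a ∧ a < b ∧ a < δ :=
    ⟨min b δ / 2, by positivity, by linarith [min_le_left b δ],
      by linarith [min_le_right b δ]⟩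
  have hua := (hst a ha0 (by linarith)).1
  obtain ⟨s, has, hsb, hs0, hsp⟩ := first_zero_aux (fun r => -u r) a b hab.le
    (hc1.neg.mono fun x hx => ha0.le.trans hx.1) hua (by simpa using hcon)
  have hs : 0 < s := ha0.trans has
  have hds := deriv_first_zero_aux (fun r => -u r) a s _ has (hD1 s hs).neg hs0 hsp
  have hus : u s = 0 := by simpa using hs0
  rcases (show 0 ≤ u' s by linarith).lt_or_eq with h1 | h1
  · exact hstep s hs.le hus h1
  · have hsub : Set.Icc a s ⊆ Set.Ici 0 := fun x hx => ha0.le.trans hx.1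
    have hne : ∀ x ∈ Set.Icc a s, x ≠ 0 := fun x hx => (ha0.trans_le hx.1).ne'
    have hne2 : ∀ x ∈ Set.Icc a s, x ^ 2 ≠ 0 := fun x hx => pow_ne_zero 2 (hne x hx)
    have hcu := hc1.mono hsub
    have hch := hhc.mono hsub
    have := unique_aux u u'
      (fun r => ((n : ℝ) - 2) * u r ^ 2 + 2 * ((n : ℝ) - 1) / r * u r
        + ((n : ℝ) - 1) / r ^ 2 + h r / r)
      (fun r => h r - ((n : ℝ) - 1) / r - ((n : ℝ) - 4) * u r) a s has
      (fun r hr => hD1 r (ha0.trans_le hr.1))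
      (fun r hr => by
        have hr0 := ha0.trans_le hr.1
        convert hD2 r hr0 using 1
        have hE := heq r hr0.le hr0
        unfold Equaz at hE
        have hu2 : u'' r = (u' r + u r / r) * h r - (((n : ℝ) - 1) / r * u' r
          - ((n : ℝ) - 2) * u r ^ 3 - 2 * ((n : ℝ) - 1) / r * u r ^ 2
          - ((n : ℝ) - 1) / r ^ 2 * u r + ((n : ℝ) - 4) * u r * u' r) := by linarith
        rw [hu2]
        ring)
      (by fun_prop (disch := assumption)) (by fun_prop (disch := assumption)) hus h1.symm
    linarith
end

section
/- Let n = 4 and let h be a continuous function on [0,∞) with h(r) ≤ 0 for all r > 0. Then for any α < 0, the solution u of the ODE u''(r) + (3/r)u'(r) − 2u(r)³ − (6/r)u(r)² − (3/r²)u(r) = [u'(r) + u(r)/r]·h(r) with initial conditions u(0) = 0, u'(0) = α is global, and it satisfies −2/r < u(r) < 0 for all r > 0. -/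
/-- The ODE (equaz) for `n = 4`:
    `u'' + (3/r)u' - 2u³ - (6/r)u² - (3/r²)u = [u' + u/r]·h(r)`
    (the term `(n-4)uu'` vanishes for `n = 4`), stated pointwise at `r`. -/
def Equaz4 (h u u' u'' : ℝ → ℝ) (r : ℝ) : Prop :=
  u'' r + 3 / r * u' r - 2 * u r ^ 3 - 6 / r * u r ^ 2 - 3 / r ^ 2 * u r
    = (u' r + u r / r) * h r

/-- `u` (with derivatives `u'`, `u''`) is a C² solution of (equaz) (with `n = 4`) on the
    set `S` with initial conditions `u(0) = 0`, `u'(0) = α`. -/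
def SolOn4 (h : ℝ → ℝ) (α : ℝ) (u u' u'' : ℝ → ℝ) (S : Set ℝ) : Prop :=
  (∀ r ∈ S, HasDerivWithinAt u (u' r) S r) ∧
  (∀ r ∈ S, HasDerivWithinAt u' (u'' r) S r) ∧
  ContinuousOn u'' S ∧
  u 0 = 0 ∧ u' 0 = α ∧
  ∀ r ∈ S, 0 < r → Equaz4 h u u' u'' r

open Set Filter Topology MeasureTheory

lemma ed4_volterra (T : (ℝ → ℝ) → (ℝ → ℝ)) (hT : ∀ p, Continuous p → Continuous (T p))
    (hL : ∀ R : ℝ, 0 < R → ∃ C : ℝ, 0 ≤ C ∧ ∀ p q, Continuous p → Continuous q →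
      ∀ r ∈ Icc 0 R, |T p r - T q r| ≤ C * ∫ s in (0:ℝ)..r, |p s - q s|) :
    ∃ p, Continuous p ∧ ∀ r, 0 ≤ r → T p r = p r := by
  let P : ℕ → ℝ → ℝ := fun n => T^[n] (fun _ => 0)
  have hPs : ∀ n, P (n+1) = T (P n) := fun n => Function.iterate_succ_apply' T n _
  have hPc : ∀ n, Continuous (P n) := by
    intro n
    induction n with
    | zero => exact continuous_const
    | succ n ih => rw [hPs]; exact hT _ ih
  have hbd : ∀ R : ℝ, 0 < R → ∃ M C : ℝ, ∀ n, ∀ r ∈ Icc 0 R,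
      |P (n+1) r - P n r| ≤ M * ((C * r)^n / n.factorial) := by
    intro R hR
    obtain ⟨C, hC, hCL⟩ := hL R hR
    obtain ⟨M, hM⟩ := (isCompact_Icc (a := (0:ℝ)) (b := R)).exists_bound_of_continuousOn
      (((hPc 1).sub (hPc 0)).continuousOn)
    refine ⟨M, C, fun n => ?_⟩
    induction n with
    | zero => intro r hr; simpa using hM r hr
    | succ n ih =>
      intro r hr
      rw [hPs (n+1), hPs n]
      refine (hCL _ _ (hT _ (hPc n)) (hPc n) r hr).trans ?_
      rw [← hPs n]
      have h1 : ∫ s in (0:ℝ)..r, |P (n+1) s - P n s| ≤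
          ∫ s in (0:ℝ)..r, M * ((C * s)^n / n.factorial) := by
        apply intervalIntegral.integral_mono_on hr.1
        · exact (((hPc (n+1)).sub (hPc n)).abs).intervalIntegrable _ _
        · exact (by fun_prop : Continuous fun s : ℝ => M * ((C * s)^n / n.factorial)).intervalIntegrable _ _
        · intro s hs; exact ih s ⟨hs.1, hs.2.trans hr.2⟩
      have h2 : ∫ s in (0:ℝ)..r, M * ((C * s)^n / n.factorial) =
          M * (C^n / n.factorial) * (r^(n+1) / (n+1)) := by
        have : (fun s : ℝ => M * ((C * s)^n / n.factorial)) =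
          fun s => (M * (C^n / n.factorial)) * s^n := by
          funext s; rw [mul_pow]; ring
        rw [this, intervalIntegral.integral_const_mul, integral_pow]; simp
      calc _ ≤ C * (M * (C^n / n.factorial) * (r^(n+1) / (n+1))) :=
            mul_le_mul_of_nonneg_left (h1.trans h2.le) hC
        _ = _ := by
          rw [Nat.factorial_succ]; push_cast
          have : (n.factorial : ℝ) ≠ 0 := by positivity
          have : (n:ℝ)+1 ≠ 0 := by positivity
          rw [mul_pow]
          field_simp
          ring
  let Q : ℝ → ℝ := fun r => ∑' n, (P (n+1) r - P n r)
  have hU : ∀ R : ℝ, 0 < R → TendstoUniformlyOn P Q atTop (Icc 0 R) := by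
    intro R hR
    obtain ⟨M, C, hb⟩ := hbd R hR
    have hsum : Summable fun n : ℕ => |M| * ((|C| * R)^n / n.factorial) :=
      (Real.summable_pow_div_factorial _).mul_left _
    have := tendstoUniformlyOn_tsum_nat (f := fun n r => P (n+1) r - P n r) (s := Icc 0 R) hsum (by
      intro n r hr
      refine (hb n r hr).trans ((le_abs_self _).trans ?_)
      rw [abs_mul, abs_div, abs_pow, abs_mul, abs_of_nonneg hr.1, Nat.abs_cast]
      have := hr.1
      have := hr.2
      gcongr)
    refine this.congr (Eventually.of_forall fun n r _ => ?_)
    simp only [Finset.sum_range_sub (fun n => P n r)]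
    simp [P]
  have hQc : ContinuousOn Q (Ici 0) := by
    intro r hr
    have h1 : ContinuousOn Q (Icc 0 (r+1)) :=
      (hU (r+1) (by have : (0:ℝ) ≤ r := hr
                    linarith)).continuousOn (Eventually.of_forall fun n => (hPc n).continuousOn).frequently
    refine (h1 r ⟨hr, by linarith⟩).mono_of_mem_nhdsWithin ?_
    rw [← Ici_inter_Iic]
    exact inter_mem self_mem_nhdsWithin (mem_nhdsWithin_of_mem_nhds (Iic_mem_nhds (by linarith)))
  let p : ℝ → ℝ := fun r => Q (max r 0)
  have hpc : Continuous p :=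
    hQc.comp_continuous (by fun_prop) (fun r => mem_Ici.2 (le_max_right _ _))
  have hpQ : ∀ r, 0 ≤ r → p r = Q r := fun r hr => by simp [p, hr]
  refine ⟨p, hpc, fun r hr => ?_⟩
  have hR : (0:ℝ) < r+1 := by linarith
  obtain ⟨C, hC, hCL⟩ := hL (r+1) hR
  have hrm : r ∈ Icc 0 (r+1) := ⟨hr, by linarith⟩
  have hlim1 : Tendsto (fun n => P (n+1) r) atTop (𝓝 (p r)) := by
    rw [hpQ r hr]
    exact ((hU (r+1) hR).tendsto_at hrm).comp (tendsto_add_atTop_nat 1)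
  have hlim2 : Tendsto (fun n => P (n+1) r) atTop (𝓝 (T p r)) := by
    rw [Metric.tendsto_atTop]
    intro ε hε
    have hδ : 0 < ε / (C * (r+1) + 1) := by positivity
    obtain ⟨N, hN⟩ := eventually_atTop.1 ((Metric.tendstoUniformlyOn_iff.1 (hU (r+1) hR)) _ hδ)
    refine ⟨N, fun n hn => ?_⟩
    rw [Real.dist_eq, hPs]
    refine (hCL _ _ (hPc n) hpc r hrm).trans_lt ?_
    have h1 : ∫ s in (0:ℝ)..r, |P n s - p s| ≤ ∫ s in (0:ℝ)..r, ε / (C * (r+1) + 1) := by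
      apply intervalIntegral.integral_mono_on hr
      · exact (((hPc n).sub hpc).abs).intervalIntegrable _ _
      · exact continuous_const.intervalIntegrable _ _
      · intro s hs
        have := hN n hn s ⟨hs.1, by linarith [hs.2]⟩
        rw [dist_comm, Real.dist_eq] at this
        rw [hpQ s hs.1]; exact this.le
    rw [intervalIntegral.integral_const, smul_eq_mul, sub_zero] at h1
    calc _ ≤ C * (r * (ε / (C * (r+1) + 1))) := mul_le_mul_of_nonneg_left h1 hC
      _ = (C * r) * ε / (C * (r+1) + 1) := by ring
      _ < ε := by
        rw [div_lt_iff₀ (by positivity)]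
        nlinarith [mul_nonneg hC hε.le]
  exact tendsto_nhds_unique hlim2 hlim1


/-- the a priori estimate -/
lemma ed4_apriori (h y p : ℝ → ℝ) (α : ℝ) (hα : α < 0) (hh : ∀ r, 0 < r → h r ≤ 0)
    (hpc : Continuous p) (hy : ∀ r, HasDerivAt y (p r) r) (hy0 : y 0 = α)
    (hp : ∀ r, 0 < r → y r ∈ Icc (α - 1) 0 →
      HasDerivAt p (6 * y r ^ 2 + 2 * r^2 * y r ^3 + h r * p r + 2 * h r * y r / r - 5 * p r / r) r) :
    ∀ r, 0 ≤ r → α - 1 < y r ∧ y r < 0 ∧ 0 < 2 + r^2 * y r := by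
  have hyc : Continuous y := continuous_iff_continuousAt.2 fun r => (hy r).continuousAt
  by_contra hcon
  push Not at hcon
  let B : Set ℝ := {r | 0 ≤ r ∧ (y r ≤ α - 1 ∨ 0 ≤ y r ∨ 2 + r^2 * y r ≤ 0)}
  have hBc : IsClosed B := by
    apply IsClosed.inter (isClosed_le continuous_const continuous_id)
    apply IsClosed.union (isClosed_le hyc continuous_const)
    apply IsClosed.union (isClosed_le continuous_const hyc)
    exact isClosed_le (f := fun r => 2 + r^2 * y r) (by fun_prop) continuous_const
  have hBn : B.Nonempty := by
    obtain ⟨r, hr, hr'⟩ := hcon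
    refine ⟨r, hr, ?_⟩
    by_cases h1 : y r ≤ α - 1
    · exact Or.inl h1
    · by_cases h2 : 0 ≤ y r
      · exact Or.inr (Or.inl h2)
      · exact Or.inr (Or.inr (hr' (not_le.1 h1) (not_le.1 h2)))
  have hBb : BddBelow B := ⟨0, fun r hr => hr.1⟩
  set R := sInf B with hRdef
  have hRB : R ∈ B := hBc.csInf_mem hBn hBb
  have hR0 : 0 < R := by
    rcases hRB.1.lt_or_eq with h1 | h1
    · exact h1
    · exfalso
      have := hRB.2
      rw [← h1, hy0] at this
      rcases this with h | h | h
      · linarith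
      · linarith
      · norm_num at h
  have hlt : ∀ r, 0 ≤ r → r < R → α - 1 < y r ∧ y r < 0 ∧ 0 < 2 + r^2 * y r := by
    intro r hr hrR
    have : r ∉ B := fun hb => absurd (csInf_le hBb hb) (not_le.2 hrR)
    have h2 : ¬ (y r ≤ α - 1 ∨ 0 ≤ y r ∨ 2 + r^2 * y r ≤ 0) := fun h => this ⟨hr, h⟩
    push Not at h2
    exact h2
  -- energy
  have hen : ∀ r, 0 < r → r < R → (2 * y r + r * p r)^2 ≤ (y r * (2 + r^2 * y r))^2 := by
    intro r hr hrR
    let E : ℝ → ℝ := fun r => r^4 * ((2 * y r + r * p r)^2 - (y r * (2 + r^2 * y r))^2)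
    have hE : AntitoneOn E (Icc 0 r) := by
      have hder : ∀ x ∈ Ioo 0 r, HasDerivAt E (2 * h x * (x^2 * (2 * y x + x * p x))^2) x := by
        intro x hx
        have hx0 := hx.1
        have hb := hlt x hx.1.le (hx.2.trans hrR)
        have hpx := hp x hx.1 ⟨hb.1.le, hb.2.1.le⟩
        have hid := hasDerivAt_id x
        have h1 := (((hy x).const_mul 2).add (hid.mul hpx)).pow 2
        have h2 := ((hy x).mul (((hid.pow 2).mul (hy x)).const_add 2)).pow 2
        have h3 := (hid.pow 4).mul (h1.sub h2)
        refine (h3.congr_deriv ?_)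
        simp
        field_simp
        ring
      apply antitoneOn_of_deriv_nonpos (convex_Icc 0 r)
      · exact (by fun_prop : Continuous E).continuousOn
      · rw [interior_Icc]; intro x hx; exact (hder x hx).differentiableAt.differentiableWithinAt
      · rw [interior_Icc]; intro x hx
        rw [(hder x hx).deriv]
        have := hh x hx.1
        nlinarith [sq_nonneg (x^2 * (2 * y x + x * p x))]
    have := hE (left_mem_Icc.2 hr.le) (right_mem_Icc.2 hr.le) hr.le
    simp only [E] at this
    have h4 : 0 < r^4 := by positivity
    norm_num at this
    nlinarith
  have hen2 : ∀ r, 0 < r → r < R → |2 * y r + r * p r| ≤ -y r * (2 + r^2 * y r) := by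
    intro r hr hrR
    have hb := hlt r hr.le hrR
    have := sq_le_sq.1 (hen r hr hrR)
    rwa [abs_mul, abs_of_neg hb.2.1, abs_of_pos hb.2.2] at this
  -- y is monotone
  have hm : MonotoneOn y (Icc 0 R) := by
    apply monotoneOn_of_deriv_nonneg (convex_Icc 0 R) hyc.continuousOn
    · intro x hx; exact (hy x).differentiableAt.differentiableWithinAt
    · rw [interior_Icc]; intro x hx
      rw [(hy x).deriv]
      have hb := hlt x hx.1.le hx.2
      have := (abs_le.1 (hen2 x hx.1 hx.2)).1
      have h5 : 0 ≤ x * p x := by nlinarith [sq_nonneg (x * y x)]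
      exact nonneg_of_mul_nonneg_right h5 hx.1
  have h1 : α ≤ y R := by
    have := hm (left_mem_Icc.2 hR0.le) (right_mem_Icc.2 hR0.le) hR0.le
    rwa [hy0] at this
  -- r^4 y is antitone
  have ha : AntitoneOn (fun r => r^4 * y r) (Icc 0 R) := by
    have hd : ∀ x, HasDerivAt (fun r => r^4 * y r) (4 * x^3 * y x + x^4 * p x) x := by
      intro x
      refine (((hasDerivAt_id x).pow 4).mul (hy x)).congr_deriv ?_
      simp
    apply antitoneOn_of_deriv_nonpos (convex_Icc 0 R)
    · exact (by fun_prop : Continuous fun r => r^4 * y r).continuousOn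
    · intro x hx; exact (hd x).differentiableAt.differentiableWithinAt
    · rw [interior_Icc]; intro x hx
      rw [(hd x).deriv]
      have hb := hlt x hx.1.le hx.2
      have := (abs_le.1 (hen2 x hx.1 hx.2)).2
      have h5 : 4 * y x + x * p x ≤ 0 := by nlinarith [sq_nonneg (x * y x)]
      have h6 : 0 < x^3 := pow_pos hx.1 3
      have : 4 * x^3 * y x + x^4 * p x = x^3 * (4 * y x + x * p x) := by ring
      rw [this]
      exact mul_nonpos_of_nonneg_of_nonpos h6.le h5
  have h2 : y R < 0 := by
    have h3 := ha (show R/2 ∈ Icc 0 R by constructor <;> linarith) (right_mem_Icc.2 hR0.le)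
      (by linarith)
    have h4 := (hlt (R/2) (by linarith) (by linarith)).2.1
    simp only at h3
    have h5 : 0 < (R/2)^4 := by positivity
    have h6 : 0 < R^4 := by positivity
    have h7 : R^4 * y R < 0 := by nlinarith
    by_contra h8
    nlinarith [mul_nonneg h6.le (not_lt.1 h8)]
  -- exponential estimate
  have he : MonotoneOn (fun r => (2 + r^2 * y r) * Real.exp (-α * r^2 / 2)) (Icc 0 R) := by
    have hd : ∀ x, HasDerivAt (fun r => (2 + r^2 * y r) * Real.exp (-α * r^2 / 2))
        ((x * (2 * y x + x * p x) - α * x * (2 + x^2 * y x)) * Real.exp (-α * x^2 / 2)) x := by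
      intro x
      refine (((((hasDerivAt_id x).pow 2).mul (hy x)).const_add 2).mul
        ((((hasDerivAt_id x).pow 2).const_mul (-α)).div_const 2).exp).congr_deriv ?_
      simp
      ring
    apply monotoneOn_of_deriv_nonneg (convex_Icc 0 R)
    · exact (by fun_prop : Continuous fun r => (2 + r^2 * y r) * Real.exp (-α * r^2 / 2)).continuousOn
    · intro x hx; exact (hd x).differentiableAt.differentiableWithinAt
    · rw [interior_Icc]; intro x hx
      rw [(hd x).deriv]
      have hb := hlt x hx.1.le hx.2
      have h6 := (abs_le.1 (hen2 x hx.1 hx.2)).1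
      have h7 : α ≤ y x := by
        have := hm (left_mem_Icc.2 hR0.le) ⟨hx.1.le, hx.2.le⟩ hx.1.le
        rwa [hy0] at this
      have h8 : 0 ≤ (2 * y x + x * p x) - α * (2 + x^2 * y x) := by
        nlinarith [mul_nonneg (sub_nonneg.2 h7) hb.2.2.le]
      have h9 : x * (2 * y x + x * p x) - α * x * (2 + x^2 * y x)
        = x * ((2 * y x + x * p x) - α * (2 + x^2 * y x)) := by ring
      rw [h9]
      exact mul_nonneg (mul_nonneg hx.1.le h8) (Real.exp_pos _).le
  have h3 : 0 < 2 + R^2 * y R := by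
    have := he (left_mem_Icc.2 hR0.le) (right_mem_Icc.2 hR0.le) hR0.le
    norm_num at this
    exact pos_of_mul_pos_left (lt_of_lt_of_le two_pos this) (Real.exp_pos _).le
  rcases hRB.2 with h | h | h <;> linarith

/-- truncation to `[a, 0]` -/
noncomputable def ed4clamp (a x : ℝ) : ℝ := max a (min x 0)

lemma ed4clamp_cont (a : ℝ) : Continuous (ed4clamp a) := by unfold ed4clamp; fun_prop

lemma ed4clamp_eq {a x : ℝ} (h : x ∈ Icc a 0) : ed4clamp a x = x := by
  simp [ed4clamp, h.1, h.2]

lemma ed4clamp_abs {a : ℝ} (ha : a ≤ 0) (x : ℝ) : |ed4clamp a x| ≤ -a := by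
  rw [abs_le]; unfold ed4clamp
  constructor
  · simp
  · have : max a (min x 0) ≤ 0 := max_le ha (min_le_right _ _)
    linarith

lemma ed4clamp_lip (a x y : ℝ) : |ed4clamp a x - ed4clamp a y| ≤ |x - y| := by
  unfold ed4clamp
  calc _ ≤ |min x 0 - min y 0| := by
        simpa [max_comm a] using abs_max_sub_max_le_abs (min x 0) (min y 0) a
    _ ≤ _ := by
        rw [min_comm x, min_comm y]
        have := abs_min_sub_min_le_max 0 x 0 y
        simpa using this

/-- the truncated nonlinearity -/
noncomputable def ed4f (a r x : ℝ) : ℝ := 6 * ed4clamp a x ^ 2 + 2 * r^2 * ed4clamp a x ^ 3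

lemma ed4f_lip {a R r : ℝ} (ha : a ≤ 0) (hr : r ∈ Icc 0 R) (x y : ℝ) :
    |ed4f a r x - ed4f a r y| ≤ (12 * (-a) + 6 * R^2 * a^2) * |x - y| := by
  unfold ed4f
  have hx := ed4clamp_abs ha x
  have hy := ed4clamp_abs ha y
  have hl := ed4clamp_lip a x y
  set X := ed4clamp a x
  set Y := ed4clamp a y
  have e : 6 * X ^ 2 + 2 * r^2 * X ^ 3 - (6 * Y ^ 2 + 2 * r^2 * Y ^ 3)
    = (6 * (X + Y) + 2 * r^2 * (X * X + X * Y + Y * Y)) * (X - Y) := by ring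
  rw [e, abs_mul]
  apply mul_le_mul _ hl (abs_nonneg _) (by nlinarith [mul_nonneg (sq_nonneg R) (sq_nonneg a)])
  have hr2 : r^2 ≤ R^2 := pow_le_pow_left₀ hr.1 hr.2 2
  have m : ∀ U V : ℝ, |U| ≤ -a → |V| ≤ -a → |U * V| ≤ a^2 := by
    intro U V hU hV
    rw [abs_mul]
    nlinarith [abs_nonneg U, abs_nonneg V]
  have h3 : |X * X + X * Y + Y * Y| ≤ 3 * a^2 := by
    have := abs_add_three (X*X) (X*Y) (Y*Y)
    linarith [m X X hx hx, m X Y hx hy, m Y Y hy hy]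
  calc _ ≤ |6 * (X + Y)| + |2 * r^2 * (X * X + X * Y + Y * Y)| := abs_add_le _ _
    _ ≤ 12 * (-a) + 6 * R^2 * a^2 := by
      rw [abs_mul 6, abs_mul (2 * r^2), abs_of_nonneg (by positivity : (0:ℝ) ≤ 2 * r^2),
        abs_of_pos (by norm_num : (0:ℝ) < 6)]
      have h4 := abs_add_le X Y
      have h5 : 2 * r^2 * |X * X + X * Y + Y * Y| ≤ 2 * R^2 * (3 * a^2) := by gcongr
      linarith

lemma ed4_exists (h : ℝ → ℝ) (hc : Continuous h) (α a : ℝ) (ha : a ≤ 0) :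
    ∃ y p : ℝ → ℝ, Continuous p ∧ (∀ r, HasDerivAt y (p r) r) ∧ y 0 = α ∧
      5 * p 0 = 2 * h 0 * α ∧
      ∀ r, 0 < r → HasDerivAt p (ed4f a r (y r) + h r * p r + 2 * h r * y r / r - 5 * p r / r) r := by
  let Y : (ℝ → ℝ) → ℝ → ℝ := fun p r => α + ∫ s in (0:ℝ)..r, p s
  have hYd : ∀ p, Continuous p → ∀ r, HasDerivAt (Y p) (p r) r := fun p hp r =>
    (intervalIntegral.integral_hasDerivAt_right (hp.intervalIntegrable _ _)
      (hp.stronglyMeasurableAtFilter _ _) hp.continuousAt).const_add α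
  have hYc : ∀ p, Continuous p → Continuous (Y p) := fun p hp =>
    continuous_iff_continuousAt.2 fun r => (hYd p hp r).continuousAt
  let G : (ℝ → ℝ) → ℝ → ℝ := fun p s => ed4f a s (Y p s) + h s * p s
  have hGc : ∀ p, Continuous p → Continuous (G p) := by
    intro p hp
    have h1 : Continuous fun s => ed4clamp a (Y p s) := (ed4clamp_cont a).comp (hYc p hp)
    simp only [G, ed4f]
    fun_prop
  let I : (ℝ → ℝ) → ℝ → ℝ → ℝ := fun p r t =>
    r * t^5 * G p (r * t) + 2 * t^4 * h (r * t) * Y p (r * t)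
  have hIc : ∀ p, Continuous p → Continuous (Function.uncurry (I p)) := by
    intro p hp
    have h1 := hGc p hp
    have h2 := hYc p hp
    simp only [I, Function.uncurry_def]
    fun_prop
  have hIc' : ∀ p, Continuous p → ∀ r, Continuous (I p r) := fun p hp r =>
    (hIc p hp).comp (Continuous.prodMk_right r)
  obtain ⟨p, hp, hfix⟩ := ed4_volterra (fun p r => ∫ t in (0:ℝ)..1, I p r t)
    (fun p hp => intervalIntegral.continuous_parametric_intervalIntegral_of_continuous' (hIc p hp) 0 1)
    (by
      intro R hR
      obtain ⟨H, hH⟩ := (isCompact_Icc (a := (0:ℝ)) (b := R)).exists_bound_of_continuousOn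
        hc.continuousOn
      have hH0 : 0 ≤ H := (norm_nonneg _).trans (hH 0 (left_mem_Icc.2 hR.le))
      set L := 12 * (-a) + 6 * R^2 * a^2 with hLdef
      have hL0 : 0 ≤ L := by nlinarith [mul_nonneg (sq_nonneg R) (sq_nonneg a)]
      refine ⟨R * L + 2 * H + H, by positivity, fun p q hp hq r hr => ?_⟩
      have habs : Continuous fun s => |p s - q s| := (hp.sub hq).abs
      set D := ∫ s in (0:ℝ)..r, |p s - q s| with hD
      have hYb : ∀ s ∈ Icc 0 r, |Y p s - Y q s| ≤ D := by
        intro s hs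
        have : Y p s - Y q s = ∫ x in (0:ℝ)..s, (p x - q x) := by
          simp only [Y]
          rw [intervalIntegral.integral_sub (hp.intervalIntegrable _ _) (hq.intervalIntegrable _ _)]
          ring
        rw [this]
        refine (intervalIntegral.abs_integral_le_integral_abs hs.1).trans ?_
        apply intervalIntegral.integral_mono_interval le_rfl hs.1 hs.2
        · exact Eventually.of_forall fun x => abs_nonneg _
        · exact habs.intervalIntegrable _ _
      have hD0 : 0 ≤ D := (abs_nonneg _).trans (hYb 0 (left_mem_Icc.2 hr.1))
      rw [← intervalIntegral.integral_sub ((hIc' p hp r).intervalIntegrable _ _)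
        ((hIc' q hq r).intervalIntegrable _ _)]
      refine (intervalIntegral.abs_integral_le_integral_abs zero_le_one).trans ?_
      have key : ∀ t ∈ Icc (0:ℝ) 1, |I p r t - I q r t| ≤
          (R * L + 2 * H) * D + H * (r * |p (r * t) - q (r * t)|) := by
        intro t ht
        have hs : r * t ∈ Icc 0 r := ⟨mul_nonneg hr.1 ht.1, mul_le_of_le_one_right hr.1 ht.2⟩
        have hs' : r * t ∈ Icc 0 R := ⟨hs.1, hs.2.trans hr.2⟩
        have hy := hYb _ hs
        have hf := ed4f_lip ha hs' (Y p (r*t)) (Y q (r*t))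
        have hh := hH _ hs'
        rw [Real.norm_eq_abs] at hh
        have e : I p r t - I q r t = r * t^5 * (ed4f a (r*t) (Y p (r*t)) - ed4f a (r*t) (Y q (r*t)))
          + t^5 * (h (r*t) * (r * (p (r*t) - q (r*t))))
          + 2 * t^4 * (h (r*t) * (Y p (r*t) - Y q (r*t))) := by
          simp only [I, G]; ring
        rw [e]
        have t5 : t^5 ≤ 1 := pow_le_one₀ ht.1 ht.2
        have t4 : t^4 ≤ 1 := pow_le_one₀ ht.1 ht.2
        have t50 : 0 ≤ t^5 := pow_nonneg ht.1 5
        have t40 : 0 ≤ t^4 := pow_nonneg ht.1 4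
        have hr0 := hr.1
        refine (abs_add_three _ _ _).trans ?_
        have b1 : |r * t^5 * (ed4f a (r*t) (Y p (r*t)) - ed4f a (r*t) (Y q (r*t)))| ≤ R * L * D := by
          rw [abs_mul, abs_of_nonneg (by positivity)]
          calc _ ≤ (R * 1) * (L * D) := by
                apply mul_le_mul _ _ (abs_nonneg _) (by positivity)
                · exact mul_le_mul hr.2 t5 t50 hR.le
                · exact hf.trans (mul_le_mul_of_nonneg_left hy hL0)
            _ = _ := by ring
        have b2 : |t^5 * (h (r*t) * (r * (p (r*t) - q (r*t))))| ≤ H * (r * |p (r * t) - q (r * t)|) := by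
          rw [abs_mul, abs_mul, abs_mul r, abs_of_nonneg t50, abs_of_nonneg hr0]
          calc _ ≤ 1 * (H * (r * |p (r * t) - q (r * t)|)) := by gcongr
            _ = _ := by ring
        have b3 : |2 * t^4 * (h (r*t) * (Y p (r*t) - Y q (r*t)))| ≤ 2 * H * D := by
          rw [abs_mul, abs_mul (h _), abs_of_nonneg (by positivity)]
          calc _ ≤ (2 * 1) * (H * D) := by gcongr
            _ = _ := by ring
        linarith
      have hcomp : Continuous fun t => |p (r * t) - q (r * t)| := by fun_prop
      calc _ ≤ ∫ t in (0:ℝ)..1, ((R * L + 2 * H) * D + H * (r * |p (r * t) - q (r * t)|)) := by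
            apply intervalIntegral.integral_mono_on zero_le_one
            · exact ((hIc' p hp r).sub (hIc' q hq r)).abs.intervalIntegrable _ _
            · exact (by fun_prop : Continuous fun t =>
                ((R * L + 2 * H) * D + H * (r * |p (r * t) - q (r * t)|))).intervalIntegrable _ _
            · exact key
        _ = (R * L + 2 * H) * D + H * D := by
            rw [intervalIntegral.integral_add (continuous_const.intervalIntegrable _ _)
              ((by fun_prop : Continuous fun t =>
                H * (r * |p (r * t) - q (r * t)|)).intervalIntegrable _ _),
              intervalIntegral.integral_const, intervalIntegral.integral_const_mul, intervalIntegral.integral_const_mul,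
              intervalIntegral.mul_integral_comp_mul_left (f := fun s => |p s - q s|)]
            simp [hD]
        _ = _ := by ring)
  refine ⟨Y p, p, hp, hYd p hp, by simp [Y], ?_, ?_⟩
  · have := hfix 0 le_rfl
    simp only [I, Y] at this
    norm_num at this
    have e : ∫ x in (0:ℝ)..1, 2 * x^4 * h 0 * α = 2 * h 0 * α / 5 := by
      have : (fun x : ℝ => 2 * x^4 * h 0 * α) = fun x => (2 * h 0 * α) * x^4 := by
        funext x; ring
      rw [this, intervalIntegral.integral_const_mul, integral_pow]; norm_num; ring
    linarith
  · intro r hr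
    let K : ℝ → ℝ := fun s => s^5 * G p s + 2 * s^4 * h s * Y p s
    have hKc : Continuous K := by
      have h1 := hGc p hp
      have h2 := hYc p hp
      simp only [K]; fun_prop
    have hpform : ∀ x, 0 < x → p x = (∫ s in (0:ℝ)..x, K s) / x^5 := by
      intro x hx
      rw [eq_div_iff (by positivity), ← hfix x hx.le, mul_comm, ← intervalIntegral.integral_const_mul]
      have : ∀ t, x^5 * I p x t = x * K (x * t) := by
        intro t; simp only [I, K]; ring
      simp only [this]
      rw [intervalIntegral.integral_const_mul, intervalIntegral.mul_integral_comp_mul_left]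
      simp
    have hd : HasDerivAt (fun x => (∫ s in (0:ℝ)..x, K s) / x^5) _ r :=
      (intervalIntegral.integral_hasDerivAt_right (hKc.intervalIntegrable _ _)
      (hKc.stronglyMeasurableAtFilter _ _) hKc.continuousAt).div (hasDerivAt_pow 5 r) (by positivity)
    have hd2 := hd.congr_of_eventuallyEq (f₁ := p) (by
      filter_upwards [lt_mem_nhds hr] with x hx using hpform x hx)
    refine hd2.congr_deriv ?_
    have h5 : (∫ s in (0:ℝ)..r, K s) = p r * r^5 := by
      rw [hpform r hr]; field_simp
    rw [h5]
    simp only [K, G]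
    field_simp
    push_cast
    ring



/-- **Theorem (existence, `n = 4`).** If `h ≤ 0` on `(0,∞)`, then for every `α < 0` the
    solution of (equaz)-(ic) is global and satisfies `-2/r < u(r) < 0` for all `r > 0`. -/
theorem existence_dimension_four (h : ℝ → ℝ) (hhc : ContinuousOn h (Set.Ici 0))
    (hh : ∀ r : ℝ, 0 < r → h r ≤ 0) (α : ℝ) (hα : α < 0) :
    ∃ u u' u'' : ℝ → ℝ, SolOn4 h α u u' u'' (Set.Ici 0) ∧
      ∀ r : ℝ, 0 < r → -2 / r < u r ∧ u r < 0 := by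
  obtain ⟨y, p, hpc, hy, hy0, hp0, hp⟩ := ed4_exists (fun r => h (max r 0))
    (hhc.comp_continuous (by fun_prop) (fun r => mem_Ici.2 (le_max_right _ _))) α (α - 1) (by linarith)
  have hmax : ∀ r : ℝ, 0 < r → h (max r 0) = h r := fun r hr => by rw [max_eq_left hr.le]
  have hp' : ∀ r, 0 < r → y r ∈ Icc (α - 1) 0 →
      HasDerivAt p (6 * y r ^ 2 + 2 * r^2 * y r ^3 + h r * p r + 2 * h r * y r / r - 5 * p r / r) r := by
    intro r hr hyr
    have := hp r hr
    simp only [hmax r hr, ed4f, ed4clamp_eq hyr] at this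
    exact this
  have hap := ed4_apriori h y p α hα hh hpc hy hy0 hp'
  have hyc : Continuous y := continuous_iff_continuousAt.2 fun r => (hy r).continuousAt
  have hu'' : ∀ r, 0 < r → HasDerivAt p
      (6 * y r ^ 2 + 2 * r^2 * y r ^3 + h r * p r + 2 * h r * y r / r - 5 * p r / r) r := by
    intro r hr
    have := hap r hr.le
    exact hp' r hr ⟨this.1.le, this.2.1.le⟩
  refine ⟨fun r => r * y r, fun r => y r + r * p r,
    fun r => r * (6 * y r ^ 2 + 2 * r^2 * y r ^3 + h r * p r) + 2 * h r * y r - 3 * p r,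
    ⟨?_, ?_, ?_, ?_, ?_, ?_⟩, ?_⟩
  · intro r _
    refine (((hasDerivAt_id r).mul (hy r)).congr_deriv ?_).hasDerivWithinAt
    simp
  · intro r hr
    rcases (mem_Ici.1 hr).lt_or_eq with h0 | h0
    · refine (((hy r).add ((hasDerivAt_id r).mul (hu'' r h0))).congr_deriv ?_).hasDerivWithinAt
      simp
      field_simp
      ring
    · subst h0
      have h1 : HasDerivAt (fun r => r * p r) (p 0) 0 := by
        rw [hasDerivAt_iff_tendsto_slope]
        refine (hpc.continuousAt.tendsto.mono_left nhdsWithin_le_nhds).congr' ?_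
        filter_upwards [self_mem_nhdsWithin] with x hx
        have hx' : x ≠ 0 := hx
        simp [slope_def_field, hx']
      refine (((hy 0).add h1).congr_deriv ?_).hasDerivWithinAt
      simp only [max_self] at hp0
      simp only [hy0]
      linarith
  · have h1 := hyc.continuousOn (s := Ici 0)
    have h2 := hpc.continuousOn (s := Ici 0)
    fun_prop
  · simp
  · simp [hy0]
  · intro r _ hr
    simp only [Equaz4]
    field_simp
    ring
  · intro r hr
    have hb := hap r hr.le
    constructor
    · rw [div_lt_iff₀ hr]
      nlinarith [hb.2.2]
    · exact mul_neg_of_pos_of_neg hr hb.2.1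
end
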